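/- arXiv:0801.3013 — 9 statements merged into one kernel-verified Lean document; each statement's English description precedes it below -/
import Mathlib

section
/- Let n, r ≥ 1 and work over K = ℂ. The set of coefficient vectors α ∈ ℂ^{r·n·n} for which the quadratic algebra A(α) does NOT have the minimal Hilbert series (i.e., for which there exists some degree d with dim_ℂ A(α)_d > b_d) has Lebesgue measure zero in ℂ^{r·n·n}. Consequently, for α in general position in the Lebesgue sense, dim_ℂ A(α)_d = b_d for every d ≥ 0. -/
/-!
Write `W` for the space of coefficient vectors on words of length `d`. The degree-`d` part of the
ideal generated by the `p_i(α)`, read in `W`, is spanned by the degree-`d` coefficients of the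
elements `a p_i(α) b`, because the relations are homogeneous (`ker_eq_span`). Hence
`dim A(α)_d = n ^ d - ρ_d(α)`, where `ρ_d(α)` is the rank of a family of vectors of `W` that depend
linearly on `α` (`quadDim_add_finrank`).

Let `α₀` minimise `dim A(α)_d`, that is, maximise `ρ_d`. Vectors of the family that are independent
at `α₀` stay independent wherever a certain determinant, polynomial in `α` and equal to `1` at `α₀`,
does not vanish. The zero set of such a determinant is null (`measure_det_eq_zero`), so
`ρ_d(α) ≥ ρ_d(α₀)` for almost every `α` (`ae_finrank_span_le`). A countable union over `d` of null
sets is null.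
-/

noncomputable section

/-- The degree-`d` monomial of the free algebra `K⟨x_1,…,x_n⟩` determined by the word
`w : Fin d → Fin n` (the ordered product `x_{w 0} ⋯ x_{w (d-1)}`). -/
def quadMonomial (K : Type) [Field K] {n d : ℕ} (w : Fin d → Fin n) :
    FreeAlgebra K (Fin n) :=
  ((List.ofFn w).map (FreeAlgebra.ι K)).prod

/-- The relation whose `RingQuot` is the quotient of `K⟨x_1,…,x_n⟩` by the two-sided ideal
generated by the quadratic polynomials `p_i(α) = Σ_{k,j} α_i^{k,j} x_k x_j`, `1 ≤ i ≤ r`. -/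
def quadRel (K : Type) [Field K] (n r : ℕ) (α : Fin r → Fin n → Fin n → K) :
    FreeAlgebra K (Fin n) → FreeAlgebra K (Fin n) → Prop := fun a b =>
  (∃ i : Fin r, a = ∑ k : Fin n, ∑ j : Fin n,
      α i k j • (FreeAlgebra.ι K k * FreeAlgebra.ι K j)) ∧ b = 0

/-- `dim_K A(α)_d`: the dimension of the `d`-th homogeneous component of the quadratic
algebra `A(α)`, i.e. of the image in `A(α)` of the span of the degree-`d` monomials. -/
def quadDim (K : Type) [Field K] (n r : ℕ) (α : Fin r → Fin n → Fin n → K) (d : ℕ) : ℕ :=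
  Module.finrank K (Submodule.span K
    {y : RingQuot (quadRel K n r α) |
      ∃ w : Fin d → Fin n, y = RingQuot.mkAlgHom K (quadRel K n r α) (quadMonomial K w)})

/-- `b_d = min_{α} dim_K A(α)_d`. -/
def quadMin (K : Type) [Field K] (n r : ℕ) (d : ℕ) : ℕ :=
  sInf (Set.range fun α : Fin r → Fin n → Fin n → K => quadDim K n r α d)


/-! ### Generic rank of a linear family of vectors -/

/-- A determinant whose entries are linear forms in `α` and which does not vanish at one point
vanishes only on a null set. On each real line `t ↦ α₀ + t β` it is a polynomial in `t` which is
nonzero at `t = 0`, so it has finitely many zeros; by Fubini some dilation about `α₀` with nonzero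
ratio pulls the zero set back to a null set. -/
theorem measure_det_eq_zero {E s : Type*} [Fintype s] [DecidableEq s]
    [NormedAddCommGroup E] [NormedSpace ℂ E] [FiniteDimensional ℂ E]
    [MeasurableSpace E] [BorelSpace E]
    (μ : MeasureTheory.Measure E) [μ.IsAddHaarMeasure]
    (M : E →ₗ[ℂ] Matrix s s ℂ) (α₀ : E) (h : (M α₀).det ≠ 0) :
    μ {α | (M α).det = 0} = 0 := by
  have : FiniteDimensional ℝ E := FiniteDimensional.complexToReal E
  have hM : Continuous M := M.continuous_of_finiteDimensional
  have hcont : Continuous fun q : E × ℝ => (M (α₀ + q.2 • q.1)).det := by fun_prop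
  have hmeas : MeasurableSet {q : E × ℝ | (M (α₀ + q.2 • q.1)).det = 0} :=
    (isClosed_eq hcont continuous_const).measurableSet
  have hline : ∀ β : E, {t : ℝ | (M (α₀ + t • β)).det = 0}.Finite := by
    intro β
    let P : Polynomial ℂ :=
      ((M α₀).map Polynomial.C + (Polynomial.X : Polynomial ℂ) • (M β).map Polynomial.C).det
    have hP : ∀ z : ℂ, P.eval z = (M (α₀ + z • β)).det := by
      intro z
      change Polynomial.evalRingHom z P = _
      rw [RingHom.map_det]
      congr 1
      ext i j
      simp only [Matrix.map_apply, RingHom.mapMatrix_apply, Matrix.add_apply, Matrix.smul_apply,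
        smul_eq_mul, map_add, map_smul, Polynomial.coe_evalRingHom, Polynomial.eval_C,
        Polynomial.eval_X, Polynomial.eval_mul]
    have hP0 : P ≠ 0 := by
      intro h0
      apply h
      have := hP 0
      simpa [h0] using this.symm
    have hfin : {z : ℂ | P.IsRoot z}.Finite := Polynomial.finite_setOfPred_isRoot hP0
    refine (hfin.preimage (Complex.ofReal_injective.injOn)).subset ?_
    intro t ht
    change P.eval (t : ℂ) = 0
    rw [hP, Complex.coe_smul]
    exact ht
  have hprod : (μ.prod MeasureTheory.volume) {q : E × ℝ | (M (α₀ + q.2 • q.1)).det = 0} = 0 := by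
    rw [MeasureTheory.Measure.measure_prod_null hmeas]
    exact Filter.Eventually.of_forall fun β => (hline β).measure_zero _
  have hswap := hprod
  rw [← MeasureTheory.Measure.prod_swap,
    MeasureTheory.Measure.map_apply measurable_swap hmeas] at hswap
  have hae := MeasureTheory.Measure.measure_ae_null_of_prod_null hswap
  have hne : ∀ᵐ t : ℝ, t ≠ 0 := by
    simp [MeasureTheory.ae_iff]
  obtain ⟨t, ht, ht0⟩ := (hae.and hne).exists
  have hset : μ ((t • ·) ⁻¹' ((α₀ + ·) ⁻¹' {α | (M α).det = 0})) = 0 := ht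
  rw [MeasureTheory.Measure.addHaar_preimage_smul μ ht0, MeasureTheory.measure_preimage_add] at hset
  rcases mul_eq_zero.1 hset with h1 | h1
  · exfalso
    rw [ENNReal.ofReal_eq_zero] at h1
    have : 0 < |(t ^ Module.finrank ℝ E)⁻¹| := by positivity
    linarith
  · exact h1

/-- The rank of a family of vectors depending linearly on a parameter is lower semicontinuous in
the measure-theoretic sense: almost everywhere it is at least its value at a given point. -/
theorem ae_finrank_span_le {E W ι : Type*}
    [NormedAddCommGroup E] [NormedSpace ℂ E] [FiniteDimensional ℂ E]
    [MeasurableSpace E] [BorelSpace E]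
    (μ : MeasureTheory.Measure E) [μ.IsAddHaarMeasure]
    [AddCommGroup W] [Module ℂ W] [FiniteDimensional ℂ W]
    (G : ι → E →ₗ[ℂ] W) (α₀ : E) :
    ∀ᵐ α ∂μ, Module.finrank ℂ (Submodule.span ℂ (Set.range fun i => G i α₀)) ≤
      Module.finrank ℂ (Submodule.span ℂ (Set.range fun i => G i α)) := by
  classical
  obtain ⟨κ, a, -, hsp, hli⟩ := exists_linearIndependent' ℂ (fun i => G i α₀)
  have : Fintype κ := @Fintype.ofFinite _ hli.finite
  -- A linear map `φ` sending the chosen independent vectors to the standard basis.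
  obtain ⟨φ, hφ⟩ := LinearMap.exists_leftInverse_of_injective
    (Fintype.linearCombination ℂ ((fun i => G i α₀) ∘ a))
    (LinearMap.ker_eq_bot.2 hli.fintypeLinearCombination_injective)
  let M : E →ₗ[ℂ] Matrix κ κ ℂ :=
    LinearMap.pi fun k => φ ∘ₗ G (a k)
  have hM : ∀ α k, M α k = φ (G (a k) α) := fun α k => rfl
  have hM0 : M α₀ = 1 := by
    ext k l
    have := LinearMap.congr_fun hφ (Pi.single k 1)
    simp at this
    rw [hM, this, Matrix.one_apply, Pi.single_apply]
    simp [eq_comm]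
  have hnull := measure_det_eq_zero μ M α₀ (by simp [hM0])
  have hae : ∀ᵐ α ∂μ, (M α).det ≠ 0 := by
    rw [MeasureTheory.ae_iff]
    simpa using hnull
  filter_upwards [hae] with α hα
  have hrow : LinearIndependent ℂ (φ ∘ fun k => G (a k) α) :=
    Matrix.linearIndependent_rows_of_det_ne_zero hα
  have hli' : LinearIndependent ℂ (fun k => G (a k) α) := hrow.of_comp φ
  rw [← hsp, finrank_span_eq_card hli, ← finrank_span_eq_card hli']
  apply Submodule.finrank_mono
  apply Submodule.span_mono
  rintro _ ⟨k, rfl⟩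
  exact ⟨a k, rfl⟩

/-! ### The degree-`d` part of the ideal of relations -/

section algebra

variable (K : Type) [Field K] (n r d : ℕ)

/-- The monomial basis of the free algebra, indexed by words of arbitrary length. -/
def wordBasis : Module.Basis (FreeMonoid (Fin n)) K (FreeAlgebra K (Fin n)) :=
  FreeAlgebra.basisFreeMonoid K (Fin n)

theorem wordBasis_apply (m : FreeMonoid (Fin n)) :
    wordBasis K n m = FreeMonoid.lift (FreeAlgebra.ι K) m := by
  simp [wordBasis, FreeAlgebra.basisFreeMonoid, FreeAlgebra.equivMonoidAlgebraFreeMonoid]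

theorem quadMonomial_eq (w : Fin d → Fin n) :
    quadMonomial K w = wordBasis K n (FreeMonoid.ofList (List.ofFn w)) := by
  rw [wordBasis_apply, quadMonomial, FreeMonoid.lift_apply]
  rfl

/-- The inclusion into the free algebra of its degree-`d` part, in coordinates indexed by the words
of length `d`. -/
def degIncl : ((Fin d → Fin n) → K) →ₗ[K] FreeAlgebra K (Fin n) :=
  Fintype.linearCombination K (fun w : Fin d → Fin n => quadMonomial K w)

/-- The coefficients of an element of the free algebra on the words of length `d`. -/
def degCoeff : FreeAlgebra K (Fin n) →ₗ[K] ((Fin d → Fin n) → K) :=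
  LinearMap.pi fun w => (wordBasis K n).coord (FreeMonoid.ofList (List.ofFn w))

theorem degCoeff_quadMonomial (w : Fin d → Fin n) :
    degCoeff K n d (quadMonomial K w) = Pi.single w 1 := by
  classical
  ext v
  rw [quadMonomial_eq]
  simp only [degCoeff, LinearMap.pi_apply, Module.Basis.coord_apply, Module.Basis.repr_self,
    Finsupp.single_apply, Pi.single_apply]
  refine if_congr ⟨fun h => ?_, fun h => by rw [h]⟩ rfl rfl
  exact (List.ofFn_injective (FreeMonoid.ofList.injective h)).symm

theorem degCoeff_degIncl (x : (Fin d → Fin n) → K) : degCoeff K n d (degIncl K n d x) = x := by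
  classical
  have : degCoeff K n d ∘ₗ degIncl K n d = LinearMap.id := by
    refine LinearMap.pi_ext' fun w => LinearMap.ext_ring ?_
    simp [degIncl, degCoeff_quadMonomial]
  exact LinearMap.congr_fun this x

theorem degIncl_degCoeff_of_length (m : FreeMonoid (Fin n)) (hm : m.length = d) :
    degIncl K n d (degCoeff K n d (wordBasis K n m)) = wordBasis K n m := by
  classical
  subst hm
  obtain ⟨w, hw⟩ : ∃ w : Fin m.length → Fin n, wordBasis K n m = quadMonomial K w := by
    refine ⟨m.toList.get, ?_⟩
    refine Eq.trans ?_ (quadMonomial_eq K n _ _).symm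
    exact congrArg _ (List.ofFn_get m.toList).symm
  rw [hw, degCoeff_quadMonomial]
  simp [degIncl]

theorem degCoeff_of_length_ne (m : FreeMonoid (Fin n)) (hm : m.length ≠ d) :
    degCoeff K n d (wordBasis K n m) = 0 := by
  classical
  ext v
  simp only [degCoeff, LinearMap.pi_apply, Module.Basis.coord_apply, Module.Basis.repr_self,
    Finsupp.single_apply, Pi.zero_apply, ite_eq_right_iff]
  intro h
  exact absurd (by rw [h]; simp [FreeMonoid.length]) hm

/-- The relation `p_i(α)`, as a linear function of the coefficient vector `α`. -/
def quadPoly (i : Fin r) : (Fin r → Fin n → Fin n → K) →ₗ[K] FreeAlgebra K (Fin n) where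
  toFun α := ∑ k : Fin n, ∑ j : Fin n, α i k j • (FreeAlgebra.ι K k * FreeAlgebra.ι K j)
  map_add' α β := by simp [add_smul, Finset.sum_add_distrib]
  map_smul' c α := by simp [mul_smul, Finset.smul_sum]

/-- The degree-`d` coefficients of the element `a p_i(α) b` of the ideal of relations, as a linear
function of `α`. -/
def relCoeff (s : FreeAlgebra K (Fin n) × Fin r × FreeAlgebra K (Fin n)) :
    (Fin r → Fin n → Fin n → K) →ₗ[K] ((Fin d → Fin n) → K) :=
  degCoeff K n d ∘ₗ LinearMap.mulRight K s.2.2 ∘ₗ LinearMap.mulLeft K s.1 ∘ₗ quadPoly K n r s.2.1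

theorem relCoeff_apply (s : FreeAlgebra K (Fin n) × Fin r × FreeAlgebra K (Fin n))
    (α : Fin r → Fin n → Fin n → K) :
    relCoeff K n r d s α = degCoeff K n d (s.1 * quadPoly K n r s.2.1 α * s.2.2) := rfl

variable (α : Fin r → Fin n → Fin n → K)

theorem mkAlgHom_quadPoly (i : Fin r) :
    RingQuot.mkAlgHom K (quadRel K n r α) (quadPoly K n r i α) = 0 := by
  rw [← map_zero (RingQuot.mkAlgHom K (quadRel K n r α))]
  exact RingQuot.mkAlgHom_rel K ⟨⟨i, rfl⟩, rfl⟩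

/-- Elements killed in `A(α)` are linear combinations of products `a p_i(α) b`. -/
theorem mem_span_of_mkAlgHom_eq_zero (y : FreeAlgebra K (Fin n))
    (hy : RingQuot.mkAlgHom K (quadRel K n r α) y = 0) :
    y ∈ Submodule.span K (Set.range
      fun s : FreeAlgebra K (Fin n) × Fin r × FreeAlgebra K (Fin n) =>
        s.1 * quadPoly K n r s.2.1 α * s.2.2) := by
  set J := Submodule.span K (Set.range
      fun s : FreeAlgebra K (Fin n) × Fin r × FreeAlgebra K (Fin n) =>
        s.1 * quadPoly K n r s.2.1 α * s.2.2) with hJ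
  have hleft : ∀ c x, x ∈ J → c * x ∈ J := by
    intro c x hx
    have : J ≤ J.comap (LinearMap.mulLeft K c) := by
      conv_lhs => rw [hJ]
      rw [Submodule.span_le]
      rintro _ ⟨s, rfl⟩
      exact Submodule.subset_span ⟨(c * s.1, s.2.1, s.2.2), by simp [mul_assoc]⟩
    exact this hx
  have hright : ∀ c x, x ∈ J → x * c ∈ J := by
    intro c x hx
    have : J ≤ J.comap (LinearMap.mulRight K c) := by
      conv_lhs => rw [hJ]
      rw [Submodule.span_le]
      rintro _ ⟨s, rfl⟩
      exact Submodule.subset_span ⟨(s.1, s.2.1, s.2.2 * c), by simp [mul_assoc]⟩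
    exact this hx
  have hrel : ∀ a b, RingQuot.Rel (quadRel K n r α) a b → a - b ∈ J := by
    intro a b h
    induction h with
    | of h =>
      obtain ⟨⟨i, rfl⟩, rfl⟩ := h
      exact Submodule.subset_span ⟨(1, i, 1), by simp [quadPoly]⟩
    | add_left _ ih => simpa using ih
    | mul_left _ ih => rw [← sub_mul]; exact hright _ _ ih
    | mul_right _ ih => rw [← mul_sub]; exact hleft _ _ ih
  have hgen : ∀ a b, Relation.EqvGen (RingQuot.Rel (quadRel K n r α)) a b → a - b ∈ J := by
    intro a b h
    induction h with
    | rel _ _ h => exact hrel _ _ h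
    | refl => simp
    | symm _ _ _ ih => rw [← neg_sub]; exact J.neg_mem ih
    | trans _ _ _ _ _ ih ih' => simpa using J.add_mem ih ih'
  rw [← map_zero (RingQuot.mkAlgHom K (quadRel K n r α))] at hy
  have hq : Quot.mk (RingQuot.Rel (quadRel K n r α)) y = Quot.mk _ 0 := by
    simpa [RingQuot.mkAlgHom_def, RingQuot.mkRingHom_def] using hy
  simpa using hgen _ _ (Quot.eqvGen_exact hq)

/-- The ideal of relations is homogeneous: the degree-`d` component of `a p_i(α) b` vanishes in
`A(α)`. For words `a`, `b` that component is either zero or all of `a p_i(α) b`. -/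
theorem mkAlgHom_degPart (i : Fin r) (a b : FreeAlgebra K (Fin n)) :
    RingQuot.mkAlgHom K (quadRel K n r α)
      (degIncl K n d (degCoeff K n d (a * quadPoly K n r i α * b))) = 0 := by
  let Φ : FreeAlgebra K (Fin n) →ₗ[K] RingQuot (quadRel K n r α) :=
    (RingQuot.mkAlgHom K (quadRel K n r α)).toLinearMap ∘ₗ degIncl K n d ∘ₗ degCoeff K n d
  have hword : ∀ u v : FreeMonoid (Fin n),
      Φ (wordBasis K n u * quadPoly K n r i α * wordBasis K n v) = 0 := by
    intro u v
    have hexp : wordBasis K n u * quadPoly K n r i α * wordBasis K n v =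
        ∑ k : Fin n, ∑ j : Fin n, α i k j •
          wordBasis K n (u * (FreeMonoid.of k * FreeMonoid.of j) * v) := by
      simp [quadPoly, wordBasis_apply, Finset.mul_sum, Finset.sum_mul]
    have hlen : ∀ k j : Fin n, (u * (FreeMonoid.of k * FreeMonoid.of j) * v).length =
        u.length + 2 + v.length := by
      intro k j
      simp [FreeMonoid.length_mul]
    by_cases hd : u.length + 2 + v.length = d
    · have hid : degIncl K n d (degCoeff K n d
          (wordBasis K n u * quadPoly K n r i α * wordBasis K n v)) =
          wordBasis K n u * quadPoly K n r i α * wordBasis K n v := by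
        rw [hexp]
        simp only [map_sum, map_smul]
        refine Finset.sum_congr rfl fun k _ => Finset.sum_congr rfl fun j _ => ?_
        rw [degIncl_degCoeff_of_length K n d _ ((hlen k j).trans hd)]
      change RingQuot.mkAlgHom K (quadRel K n r α) (degIncl K n d (degCoeff K n d _)) = 0
      rw [hid, map_mul, map_mul, mkAlgHom_quadPoly]
      simp
    · have hz : degCoeff K n d
          (wordBasis K n u * quadPoly K n r i α * wordBasis K n v) = 0 := by
        rw [hexp]
        simp only [map_sum, map_smul]
        refine Finset.sum_eq_zero fun k _ => Finset.sum_eq_zero fun j _ => ?_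
        rw [degCoeff_of_length_ne K n d _ (by rw [hlen]; exact hd), smul_zero]
      change RingQuot.mkAlgHom K (quadRel K n r α) (degIncl K n d (degCoeff K n d _)) = 0
      rw [hz]
      simp
  have h1 : ∀ u : FreeMonoid (Fin n),
      Φ (wordBasis K n u * quadPoly K n r i α * b) = 0 := by
    intro u
    have : Φ ∘ₗ LinearMap.mulLeft K (wordBasis K n u * quadPoly K n r i α) = 0 :=
      (wordBasis K n).ext fun v => hword u v
    exact LinearMap.congr_fun this b
  have : Φ ∘ₗ LinearMap.mulRight K b ∘ₗ LinearMap.mulRight K (quadPoly K n r i α) = 0 :=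
    (wordBasis K n).ext fun u => by simpa using h1 u
  exact LinearMap.congr_fun this a

/-- The degree-`d` part of the ideal of relations, in coordinates, is spanned by the vectors
`relCoeff K n r d s α`. -/
theorem ker_eq_span :
    LinearMap.ker ((RingQuot.mkAlgHom K (quadRel K n r α)).toLinearMap ∘ₗ degIncl K n d) =
      Submodule.span K (Set.range fun s => relCoeff K n r d s α) := by
  apply le_antisymm
  · intro x hx
    have h := mem_span_of_mkAlgHom_eq_zero K n r α (degIncl K n d x) hx
    have h' := Submodule.mem_map_of_mem (f := degCoeff K n d) h
    rw [degCoeff_degIncl, Submodule.map_span, ← Set.range_comp] at h'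
    exact h'
  · rw [Submodule.span_le]
    rintro _ ⟨s, rfl⟩
    exact mkAlgHom_degPart K n r d α s.2.1 s.1 s.2.2

theorem quadDim_add_finrank :
    quadDim K n r α d +
      Module.finrank K (Submodule.span K (Set.range fun s => relCoeff K n r d s α)) = n ^ d := by
  have hrange : LinearMap.range
      ((RingQuot.mkAlgHom K (quadRel K n r α)).toLinearMap ∘ₗ degIncl K n d) =
      Submodule.span K {y : RingQuot (quadRel K n r α) |
        ∃ w : Fin d → Fin n, y = RingQuot.mkAlgHom K (quadRel K n r α) (quadMonomial K w)} := by
    rw [LinearMap.range_comp, degIncl, Fintype.range_linearCombination, Submodule.map_span,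
      ← Set.range_comp]
    congr 1
    ext y
    simp [eq_comm]
  have := LinearMap.finrank_range_add_finrank_ker
    ((RingQuot.mkAlgHom K (quadRel K n r α)).toLinearMap ∘ₗ degIncl K n d)
  rw [ker_eq_span, hrange] at this
  simpa [quadDim] using this

end algebra

/-! ### Almost every coefficient vector is minimal -/

theorem ae_quadDim_eq (n r : ℕ) :
    ∀ᵐ α : Fin r → Fin n → Fin n → ℂ, ∀ d : ℕ, quadDim ℂ n r α d = quadMin ℂ n r d := by
  rw [MeasureTheory.ae_all_iff]
  intro d
  obtain ⟨α₀, hα₀⟩ : quadMin ℂ n r d ∈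
      Set.range fun α : Fin r → Fin n → Fin n → ℂ => quadDim ℂ n r α d :=
    Nat.sInf_mem (Set.range_nonempty _)
  have hvol₁ : (MeasureTheory.volume : MeasureTheory.Measure (Fin n → ℂ)).IsAddHaarMeasure :=
    MeasureTheory.Measure.pi.isAddHaarMeasure _
  have hvol₂ :
      (MeasureTheory.volume : MeasureTheory.Measure (Fin n → Fin n → ℂ)).IsAddHaarMeasure :=
    MeasureTheory.Measure.pi.isAddHaarMeasure _
  have hvol₃ : (MeasureTheory.volume :
      MeasureTheory.Measure (Fin r → Fin n → Fin n → ℂ)).IsAddHaarMeasure :=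
    MeasureTheory.Measure.pi.isAddHaarMeasure _
  filter_upwards [ae_finrank_span_le MeasureTheory.volume (relCoeff ℂ n r d) α₀] with α hα
  have h0 := quadDim_add_finrank ℂ n r d α₀
  have h1 := quadDim_add_finrank ℂ n r d α
  have hmin : quadMin ℂ n r d ≤ quadDim ℂ n r α d := Nat.sInf_le ⟨α, rfl⟩
  dsimp only at hα₀
  omega

/-- the set of coefficient vectors `α ∈ ℂ^{r n n}` for which `A(α)` does NOT
have the minimal Hilbert series (i.e. `dim_ℂ A(α)_d > b_d` for some `d`) has Lebesgue
measure zero; consequently for `α` in general position in the Lebesgue sense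
`dim_ℂ A(α)_d = b_d` for every `d`. -/
theorem stmt0 (n r : ℕ) (hn : 1 ≤ n) (hr : 1 ≤ r) :
    MeasureTheory.volume
      {α : Fin r → Fin n → Fin n → ℂ | ∃ d : ℕ, quadMin ℂ n r d < quadDim ℂ n r α d} = 0 ∧
    MeasureTheory.volume
      {α : Fin r → Fin n → Fin n → ℂ | ¬ ∀ d : ℕ, quadDim ℂ n r α d = quadMin ℂ n r d} = 0 := by
  have h := MeasureTheory.ae_iff.1 (ae_quadDim_eq n r)
  refine ⟨MeasureTheory.measure_mono_null ?_ h, h⟩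
  rintro α ⟨d, hd⟩ hall
  exact hd.ne' (hall d)
end
end

section
/- (Anick's conjecture for n ≤ 7.) Let K be a field of characteristic 0, let 1 ≤ n ≤ 7, and set r = n(n−1)/2. Define integers a_d by a_0 = 1, a_1 = n, and a_d = n·a_{d−1} − r·a_{d−2} for d ≥ 2 (the coefficients of the power series (1 − nt + (n(n−1)/2)t²)^{−1}), and set c_d = a_d if a_e ≥ 0 for all e ≤ d, and c_d = 0 otherwise (the coefficients of |(1 − nt + (n(n−1)/2)t²)^{−1}|). Then there exists a coefficient vector α ∈ K^{r·n·n} such that dim_K A(α)_d = c_d for every d ≥ 0; that is, the Anick lower bound |(1 − nt + (n(n−1)/2)t²)^{−1}| for the Hilbert series of algebras with n generators and n(n−1)/2 quadratic relations is attained. -/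
/-!
The lower bound `c_d ≤ dim A(α)_d` holds for every `α`, by Golod and Shafarevich: if `I_d` is the
degree-`d` part of the ideal of relations, `V` the span of the variables and `R` the span of the
`p_i`, then `I_{d+2} = I_{d+1} V + V^d R`. Writing `V^d = I_d ⊕ C`, the summand `I_d R` is absorbed
by `I_{d+1} V`, so `dim I_{d+2} ≤ n dim I_{d+1} + r dim C`, that is,
`n u_{d+1} ≤ u_{d+2} + r u_d` for `u_d = dim A(α)_d` (`golod_shafarevich`). Hence it suffices to
exhibit one `α` with `u_d ≤ c_d` for all `d` (`eq_anickC_of_le`).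

For `n = 1` the free algebra itself works, and for `n = 2` the relation `x_0 x_1 = 0` leaves only
the monomials `x_1^a x_0^(d-a)`.

For `3 ≤ n ≤ 7` the relations are explicit sums of monomials with coefficients `1` (`rels3`, …,
`rels7`). Everything then takes place over `ℤ`: let `L_d` be the subgroup of `A(α)` generated by
the words of degree `d`. A Gaussian elimination over `𝔽₂` finds a list `N_d` of words such that
`L_d ⊆ ⟨N_d⟩ + 2 L_d`. By Nakayama's lemma some odd integer maps `L_d` into `⟨N_d⟩`, and since odd
integers are invertible in characteristic `0`, the words in `N_d` span `A(α)_d` over `K`. The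
lengths of the lists `N_d` are exactly the numbers `c_d`.

The elimination (`state`) is run by kernel reduction, so vectors over `𝔽₂` are the bits of natural
numbers and a whole matrix is a single natural number, which lets one bitwise operation treat all
rows at once. Its soundness rests on the relation `Rep d m y`: the sum of the words marked by the
bits of `m` agrees with `y` modulo `2 L_d`. Suppose each word of degree `d` is, modulo `2`, a
combination of the words in `N_d`. The products `x_j u` with `u ∈ N_d` then generate in degree
`d + 1`; each is a target row of the matrix, and the other rows represent the relations `p_i y = 0`
with `y ∈ N_{d-1}`. Reducing all rows by the relation rows preserves the elements of `A(α)` they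
represent, and `N_{d+1}` collects the words still occurring in the target rows (`inv_step`).
-/

noncomputable section

/-- The coefficients `a_d` of the power series `(1 - nt + (n(n-1)/2)t²)^{-1}`:
`a_0 = 1`, `a_1 = n`, `a_d = n·a_{d-1} - (n(n-1)/2)·a_{d-2}`. -/
def anickA (n : ℕ) : ℕ → ℤ
  | 0 => 1
  | 1 => (n : ℤ)
  | (d + 2) => (n : ℤ) * anickA n (d + 1) - ((n * (n - 1) / 2 : ℕ) : ℤ) * anickA n d

open Classical in
/-- The coefficients `c_d` of `|(1 - nt + (n(n-1)/2)t²)^{-1}|`: `c_d = a_d` if `a_e ≥ 0`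
for all `e ≤ d`, and `c_d = 0` otherwise. -/
def anickC (n d : ℕ) : ℕ :=
  if ∀ e ≤ d, 0 ≤ anickA n e then (anickA n d).toNat else 0

namespace Anick

/-! ### The Golod–Shafarevich lower bound -/

section LowerBound

open Module Submodule

variable (K : Type) [Field K] (n r : ℕ) (α : Fin r → Fin n → Fin n → K)

/-- The span `V` of the variables in the free algebra, so that `V ^ d` is its degree-`d` part. -/
def gens : Submodule K (FreeAlgebra K (Fin n)) := span K (Set.range (FreeAlgebra.ι K))

/-- The quadratic polynomial `p_i(α)`. -/
def poly (i : Fin r) : FreeAlgebra K (Fin n) :=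
  ∑ k : Fin n, ∑ j : Fin n, α i k j • (FreeAlgebra.ι K k * FreeAlgebra.ι K j)

/-- The span `R` of the quadratic polynomials `p_i(α)`. -/
def relSpan : Submodule K (FreeAlgebra K (Fin n)) := span K (Set.range (poly K n r α))

/-- The degree-`d` part of the two-sided ideal generated by the `p_i(α)`, as defined by the recursion
`I_{d+2} = I_{d+1} V + V^d R`. -/
def idl : ℕ → Submodule K (FreeAlgebra K (Fin n))
  | 0 => ⊥
  | 1 => ⊥
  | d + 2 => idl (d + 1) * gens K n ⊔ gens K n ^ d * relSpan K n r α

/-- The algebra map `x_i ↦ x_i t` into polynomials in `t`; the coefficient of `t^d` in the image of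
`y` is the homogeneous component of `y` of degree `d`. -/
def grading : FreeAlgebra K (Fin n) →ₐ[K] Polynomial (FreeAlgebra K (Fin n)) :=
  FreeAlgebra.lift K fun i => Polynomial.C (FreeAlgebra.ι K i) * Polynomial.X

theorem ι_mem_gens (i : Fin n) : FreeAlgebra.ι K i ∈ gens K n :=
  subset_span ⟨i, rfl⟩

theorem gens_pow_eq (d : ℕ) :
    gens K n ^ d = span K (Set.range fun w : Fin d → Fin n => quadMonomial K w) := by
  rw [gens, Submodule.span_pow]
  congr 1
  ext y
  rw [Set.mem_pow]
  constructor
  · rintro ⟨f, rfl⟩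
    choose g hg using fun i => (f i).2
    refine ⟨g, ?_⟩
    simp only [quadMonomial, List.map_ofFn]
    congr 2
    funext i
    exact hg i
  · rintro ⟨w, rfl⟩
    refine ⟨fun i => ⟨FreeAlgebra.ι K (w i), w i, rfl⟩, ?_⟩
    simp only [quadMonomial, List.map_ofFn]
    rfl

instance (d : ℕ) : FiniteDimensional K ↥(gens K n ^ d) := by
  rw [gens_pow_eq]
  exact FiniteDimensional.span_of_finite K (Set.finite_range _)

theorem quadMonomial_eq_basis {d : ℕ} (w : Fin d → Fin n) :
    quadMonomial K w = FreeAlgebra.basisFreeMonoid K (Fin n) (FreeMonoid.ofList (List.ofFn w)) := by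
  have h : ∀ l : List (Fin n), (l.map (FreeAlgebra.ι K)).prod =
      FreeAlgebra.basisFreeMonoid K (Fin n) (FreeMonoid.ofList l) := by
    intro l
    simp [FreeAlgebra.basisFreeMonoid, FreeAlgebra.equivMonoidAlgebraFreeMonoid,
       MonoidAlgebra.coeffLinearEquiv, FreeMonoid.lift_apply]
  exact h _

theorem finrank_gens_pow (d : ℕ) : finrank K ↥(gens K n ^ d) = n ^ d := by
  rw [gens_pow_eq, finrank_span_eq_card]
  · simp
  · have := (FreeAlgebra.basisFreeMonoid K (Fin n)).linearIndependent.comp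
      (fun w : Fin d → Fin n => FreeMonoid.ofList (List.ofFn w))
      (fun a b h => List.ofFn_injective (FreeMonoid.ofList.injective h))
    rw [show (fun w : Fin d → Fin n => quadMonomial K w) = _ from
      funext (quadMonomial_eq_basis K n)]
    exact this

theorem finrank_mul_le {A : Type} [Ring A] [Algebra K A] (S T : Submodule K A)
    [FiniteDimensional K S] [FiniteDimensional K T] :
    FiniteDimensional K ↥(S * T) ∧ finrank K ↥(S * T) ≤ finrank K S * finrank K T := by
  rw [← Submodule.mulMap_range]
  refine ⟨inferInstance, ?_⟩
  refine (LinearMap.finrank_range_le _).trans ?_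
  rw [finrank_tensorProduct]

theorem relSpan_le : relSpan K n r α ≤ gens K n ^ 2 := by
  rw [relSpan, span_le]
  rintro _ ⟨i, rfl⟩
  refine sum_mem fun k _ => sum_mem fun j _ => smul_mem _ _ ?_
  rw [pow_two]
  exact mul_mem_mul (ι_mem_gens K n k) (ι_mem_gens K n j)

theorem idl_le : ∀ d, idl K n r α d ≤ gens K n ^ d
  | 0 => bot_le
  | 1 => bot_le
  | d + 2 => by
    rw [idl]
    refine sup_le ?_ ?_
    · rw [pow_succ]
      exact mul_le_mul' (idl_le (d + 1)) le_rfl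
    · rw [pow_add]
      exact mul_le_mul' le_rfl (relSpan_le K n r α)

theorem idl_mul_gens : ∀ d, idl K n r α d * gens K n ≤ idl K n r α (d + 1)
  | 0 => by simp [idl]
  | d + 1 => by rw [idl]; exact le_sup_left

theorem gens_mul_idl : ∀ d, gens K n * idl K n r α d ≤ idl K n r α (d + 1)
  | 0 => by simp [idl]
  | 1 => by simp [idl]
  | d + 2 => by
    rw [idl, Submodule.mul_sup]
    refine sup_le ?_ ?_
    · rw [← mul_assoc]
      exact (mul_le_mul' (gens_mul_idl (d + 1)) le_rfl).trans (idl_mul_gens K n r α _)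
    · rw [← mul_assoc, ← pow_succ']
      conv_rhs => rw [idl]
      exact le_sup_right

theorem gens_pow_mul_idl (e d : ℕ) : gens K n ^ e * idl K n r α d ≤ idl K n r α (e + d) := by
  induction e with
  | zero => simp
  | succ e ih =>
    rw [pow_succ', mul_assoc]
    refine (mul_le_mul' le_rfl ih).trans ((gens_mul_idl K n r α _).trans ?_)
    rw [add_right_comm]

theorem idl_mul_gens_pow (e d : ℕ) : idl K n r α d * gens K n ^ e ≤ idl K n r α (d + e) := by
  induction e with
  | zero => simp
  | succ e ih =>
    rw [pow_succ, ← mul_assoc]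
    exact (mul_le_mul' ih le_rfl).trans (idl_mul_gens K n r α _)

theorem grading_of_mem (d : ℕ) : ∀ v ∈ gens K n ^ d, grading K n v = Polynomial.monomial d v := by
  induction d with
  | zero =>
    intro v hv
    rw [pow_zero, Submodule.mem_one] at hv
    obtain ⟨c, rfl⟩ := hv
    rw [AlgHom.commutes]
    rfl
  | succ d ih =>
    intro v hv
    rw [pow_succ] at hv
    refine Submodule.mul_induction_on hv (fun a ha b hb => ?_) (fun x y hx hy => ?_)
    · have hb' : grading K n b = Polynomial.monomial 1 b := by
        induction hb using Submodule.span_induction with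
        | mem x hx =>
          obtain ⟨i, rfl⟩ := hx
          simp [grading, Polynomial.C_mul_X_eq_monomial]
        | zero => simp
        | add x y _ _ hx hy => simp [hx, hy]
        | smul c x _ hx => rw [map_smul, hx, Polynomial.smul_monomial]
      rw [map_mul, ih a ha, hb', Polynomial.monomial_mul_monomial]
    · simp [hx, hy]

theorem coeff_grading_mem (y : FreeAlgebra K (Fin n)) :
    ∀ d, (grading K n y).coeff d ∈ gens K n ^ d := by
  induction y using FreeAlgebra.induction with
  | grade0 c =>
    intro d
    rw [AlgHom.commutes, Polynomial.algebraMap_apply, Polynomial.coeff_C]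
    split_ifs with h
    · subst h
      rw [pow_zero]
      exact Submodule.algebraMap_mem c
    · exact zero_mem _
  | grade1 i =>
    intro d
    rw [grading_of_mem K n 1 _ (by rw [pow_one]; exact ι_mem_gens K n i),
      Polynomial.coeff_monomial]
    split_ifs with h
    · subst h
      rw [pow_one]
      exact ι_mem_gens K n i
    · exact zero_mem _
  | mul a b ha hb =>
    intro d
    rw [map_mul, Polynomial.coeff_mul]
    refine sum_mem fun p hp => ?_
    rw [← Finset.HasAntidiagonal.mem_antidiagonal.1 hp, pow_add]
    exact mul_mem_mul (ha _) (hb _)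
  | add a b ha hb =>
    intro d
    rw [map_add, Polynomial.coeff_add]
    exact add_mem (ha d) (hb d)

/-- The elements all of whose homogeneous components lie in `idl`. It is a two-sided ideal
containing the relations, hence contains the kernel of the projection onto `A(α)`. -/
def hIdeal : Ideal (FreeAlgebra K (Fin n)) where
  carrier := {y | ∀ d, (grading K n y).coeff d ∈ idl K n r α d}
  zero_mem' := fun d => by simp
  add_mem' := fun {a b} ha hb d => by
    rw [map_add, Polynomial.coeff_add]
    exact add_mem (ha d) (hb d)
  smul_mem' := fun c y hy d => by
    rw [smul_eq_mul, map_mul, Polynomial.coeff_mul]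
    refine sum_mem fun p hp => ?_
    rw [← Finset.HasAntidiagonal.mem_antidiagonal.1 hp]
    exact gens_pow_mul_idl K n r α _ _ (mul_mem_mul (coeff_grading_mem K n c _) (hy _))

instance : (hIdeal K n r α).IsTwoSided where
  mul_mem_of_left := fun {a} b ha d => by
    rw [map_mul, Polynomial.coeff_mul]
    refine sum_mem fun p hp => ?_
    rw [← Finset.HasAntidiagonal.mem_antidiagonal.1 hp]
    exact idl_mul_gens_pow K n r α _ _ (mul_mem_mul (ha _) (coeff_grading_mem K n b _))

theorem poly_mem_idl (i : Fin r) : poly K n r α i ∈ idl K n r α 2 := by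
  rw [idl]
  refine mem_sup_right ?_
  rw [pow_zero, one_mul]
  exact subset_span ⟨i, rfl⟩

theorem mem_hIdeal_of_mkAlgHom_eq_zero (y : FreeAlgebra K (Fin n))
    (hy : RingQuot.mkAlgHom K (quadRel K n r α) y = 0) : y ∈ hIdeal K n r α := by
  have hrel : ∀ ⦃a b⦄, quadRel K n r α a b →
      Ideal.Quotient.mk (hIdeal K n r α) a = Ideal.Quotient.mk (hIdeal K n r α) b := by
    rintro a b ⟨⟨i, rfl⟩, rfl⟩
    rw [map_zero, Ideal.Quotient.eq_zero_iff_mem]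
    intro d
    have hp := poly_mem_idl K n r α i
    change (grading K n (poly K n r α i)).coeff d ∈ _
    rw [grading_of_mem K n 2 _ (idl_le K n r α 2 hp), Polynomial.coeff_monomial]
    split_ifs with h
    · subst h
      exact hp
    · exact zero_mem _
  have h := RingQuot.lift_mkRingHom_apply (Ideal.Quotient.mk (hIdeal K n r α)) hrel y
  have hy' : RingQuot.mkRingHom (quadRel K n r α) y = 0 := by
    rw [← RingQuot.mkAlgHom_coe K]
    exact hy
  rw [hy', map_zero] at h
  exact Ideal.Quotient.eq_zero_iff_mem.1 h.symm

theorem mkAlgHom_eq_zero_of_mem_idl : ∀ d, ∀ y ∈ idl K n r α d,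
    RingQuot.mkAlgHom K (quadRel K n r α) y = 0 := by
  intro d
  suffices h : idl K n r α d ≤
      LinearMap.ker (RingQuot.mkAlgHom K (quadRel K n r α)).toLinearMap by
    intro y hy
    exact h hy
  induction d using Nat.strong_induction_on with
  | _ d ih =>
    match d, ih with
    | 0, _ => exact bot_le
    | 1, _ => exact bot_le
    | d + 2, ih =>
      rw [idl]
      refine sup_le (Submodule.mul_le.2 fun a ha b _ => ?_) (Submodule.mul_le.2 fun a _ b hb => ?_)
      · have := ih (d + 1) (by omega) ha
        simp only [LinearMap.mem_ker, AlgHom.toLinearMap_apply] at this ⊢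
        rw [map_mul, this, zero_mul]
      · have : relSpan K n r α ≤
            LinearMap.ker (RingQuot.mkAlgHom K (quadRel K n r α)).toLinearMap := by
          rw [relSpan, span_le]
          rintro _ ⟨i, rfl⟩
          have := RingQuot.mkAlgHom_rel K (s := quadRel K n r α)
            (x := poly K n r α i) (y := 0) ⟨⟨i, rfl⟩, rfl⟩
          simpa using this
        have := this hb
        simp only [LinearMap.mem_ker, AlgHom.toLinearMap_apply] at this ⊢
        rw [map_mul, this, mul_zero]

/-- Rank-nullity for the projection of `V ^ d` onto `A(α)_d`, whose kernel is `idl d`. -/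
theorem quadDim_add_finrank_idl (d : ℕ) :
    quadDim K n r α d + finrank K (idl K n r α d) = n ^ d := by
  set π := (RingQuot.mkAlgHom K (quadRel K n r α)).toLinearMap with hπ
  have h1 : (span K {y : RingQuot (quadRel K n r α) |
      ∃ w : Fin d → Fin n, y = RingQuot.mkAlgHom K (quadRel K n r α) (quadMonomial K w)}) =
      LinearMap.range (π.domRestrict (gens K n ^ d)) := by
    rw [LinearMap.range_domRestrict, gens_pow_eq, Submodule.map_span]
    congr 1
    ext y
    constructor
    · rintro ⟨w, rfl⟩
      exact ⟨_, ⟨w, rfl⟩, rfl⟩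
    · rintro ⟨_, ⟨w, rfl⟩, rfl⟩
      exact ⟨w, rfl⟩
  have h2 : (LinearMap.ker (π.domRestrict (gens K n ^ d))).map (gens K n ^ d).subtype =
      idl K n r α d := by
    ext y
    constructor
    · rintro ⟨⟨z, hz⟩, hk, rfl⟩
      have hk' : RingQuot.mkAlgHom K (quadRel K n r α) z = 0 := hk
      have := mem_hIdeal_of_mkAlgHom_eq_zero K n r α z hk' d
      rwa [grading_of_mem K n d z hz, Polynomial.coeff_monomial_same] at this
    · intro hy
      exact ⟨⟨y, idl_le K n r α d hy⟩, mkAlgHom_eq_zero_of_mem_idl K n r α d y hy, rfl⟩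
  rw [quadDim, h1, ← h2, LinearEquiv.finrank_eq
    (Submodule.equivMapOfInjective _ (Submodule.subtype_injective _) _).symm,
    LinearMap.finrank_range_add_finrank_ker, finrank_gens_pow]

instance (d : ℕ) : FiniteDimensional K ↥(idl K n r α d) :=
  Submodule.finiteDimensional_of_le (idl_le K n r α d)

theorem finrank_gens : finrank K (gens K n) = n := by
  have := finrank_gens_pow K n 1
  rwa [pow_one, pow_one] at this

theorem finrank_relSpan_le : finrank K (relSpan K n r α) ≤ r := by
  have := finrank_range_le_card (R := K) (poly K n r α)
  rw [Fintype.card_fin] at this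
  exact this

/-- The Golod–Shafarevich inequality. A complement `C` of `I_d` in `V ^ d` has dimension
`dim A(α)_d`, and `I_{d+2} = I_{d+1} V + C R` because `I_d R ⊆ I_d V V ⊆ I_{d+1} V`. -/
theorem golod_shafarevich (d : ℕ) :
    n * quadDim K n r α (d + 1) ≤ quadDim K n r α (d + 2) + r * quadDim K n r α d := by
  obtain ⟨C₀, hC⟩ := Submodule.exists_isCompl (idl K n r α d)
  set C := C₀ ⊓ gens K n ^ d with hCdef
  have hsup : idl K n r α d ⊔ C = gens K n ^ d := by
    rw [hCdef, ← sup_inf_assoc_of_le _ (idl_le K n r α d), hC.sup_eq_top, top_inf_eq]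
  have hinf : idl K n r α d ⊓ C = ⊥ := by
    rw [eq_bot_iff, ← hC.inf_eq_bot]
    exact inf_le_inf_left _ inf_le_left
  have : FiniteDimensional K C :=
    Submodule.finiteDimensional_of_le (inf_le_right : C ≤ gens K n ^ d)
  have hCd : finrank K C = quadDim K n r α d := by
    have h1 := Submodule.finrank_sup_add_finrank_inf_eq (idl K n r α d) C
    rw [hsup, hinf, finrank_bot, finrank_gens_pow] at h1
    have h2 := quadDim_add_finrank_idl K n r α d
    omega
  have : FiniteDimensional K (gens K n) := by
    rw [← pow_one (gens K n)]; infer_instance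
  have : FiniteDimensional K (relSpan K n r α) :=
    Submodule.finiteDimensional_of_le (relSpan_le K n r α)
  have hle : idl K n r α (d + 2) ≤ idl K n r α (d + 1) * gens K n ⊔ C * relSpan K n r α := by
    rw [idl]
    refine sup_le le_sup_left ?_
    rw [← hsup, Submodule.sup_mul]
    refine sup_le (le_sup_of_le_left ?_) le_sup_right
    refine (mul_le_mul' le_rfl (relSpan_le K n r α)).trans ?_
    rw [pow_two, ← mul_assoc]
    exact mul_le_mul' (idl_mul_gens K n r α d) le_rfl
  obtain ⟨f1, g1⟩ := finrank_mul_le K (idl K n r α (d + 1)) (gens K n)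
  obtain ⟨f2, g2⟩ := finrank_mul_le K C (relSpan K n r α)
  have h3 := (Submodule.finrank_mono hle).trans (Submodule.finrank_add_le_finrank_add_finrank _ _)
  have h4 := quadDim_add_finrank_idl K n r α (d + 1)
  have h5 := quadDim_add_finrank_idl K n r α (d + 2)
  have h6 : finrank K C * finrank K (relSpan K n r α) ≤ r * quadDim K n r α d := by
    rw [hCd, mul_comm]
    exact Nat.mul_le_mul_right _ (finrank_relSpan_le K n r α)
  rw [finrank_gens] at g1
  have h7 : n ^ (d + 2) = n * quadDim K n r α (d + 1) + finrank K (idl K n r α (d + 1)) * n := by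
    rw [pow_succ, ← h4]; ring
  omega

theorem quadDim_zero : quadDim K n r α 0 = 1 := by
  have := quadDim_add_finrank_idl K n r α 0
  rw [idl, finrank_bot] at this
  simpa using this

theorem quadDim_one : quadDim K n r α 1 = n := by
  have := quadDim_add_finrank_idl K n r α 1
  rw [idl, finrank_bot] at this
  simpa using this

end LowerBound

/-- An algebra whose dimensions do not exceed the Anick bound attains it: as long as the `a_e` are
nonnegative, induction with the Golod–Shafarevich inequality gives `a_d ≤ dim A(α)_d`, and where
`c_d = 0` there is nothing to prove. -/
theorem eq_anickC_of_le (K : Type) [Field K] (n : ℕ)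
    (α : Fin (n * (n - 1) / 2) → Fin n → Fin n → K)
    (h : ∀ d, quadDim K n (n * (n - 1) / 2) α d ≤ anickC n d) (d : ℕ) :
    quadDim K n (n * (n - 1) / 2) α d = anickC n d := by
  have hle : ∀ e, (∀ e' ≤ e, 0 ≤ anickA n e') →
      (quadDim K n (n * (n - 1) / 2) α e : ℤ) ≤ anickA n e := by
    intro e he
    have h1 := h e
    rw [anickC, if_pos he] at h1
    have := he e le_rfl
    omega
  have key : ∀ d, (∀ e ≤ d, 0 ≤ anickA n e) →
      (quadDim K n (n * (n - 1) / 2) α d : ℤ) = anickA n d := by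
    intro d
    induction d using Nat.strong_induction_on with
    | _ d ih =>
      intro hd
      match d, ih, hd with
      | 0, _, _ => simp [quadDim_zero, anickA]
      | 1, _, _ => simp [quadDim_one, anickA]
      | d + 2, ih, hd =>
        refine le_antisymm (hle _ hd) ?_
        have g := golod_shafarevich K n _ α d
        have g : ((n * _ : ℕ) : ℤ) ≤ ((_ + _ * _ : ℕ) : ℤ) := Int.ofNat_le.2 g
        rw [Nat.cast_mul, Nat.cast_add, Nat.cast_mul] at g
        rw [ih (d + 1) (by omega) (fun e he => hd e (by omega)),
          ih d (by omega) (fun e he => hd e (by omega))] at g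
        rw [anickA]
        linarith
  by_cases hd : ∀ e ≤ d, 0 ≤ anickA n e
  · have := key d hd
    rw [anickC, if_pos hd, ← this, Int.toNat_natCast]
  · have := h d
    rw [anickC, if_neg hd] at this ⊢
    omega

/-! ### Integral spans of words and their reduction modulo 2 -/

section Words

variable {A : Type} [Ring A] (X : ℕ → A) (n : ℕ)

/-- The word of degree `d` with code `c`: the base-`n` digits of `c < n ^ d`, most significant first,
are the indices of its letters. -/
def wd : ℕ → ℕ → A
  | 0, _ => 1
  | d + 1, c => X (c / n ^ d) * wd d (c % n ^ d)

/-- The additive subgroup generated by the words of degree `d`. -/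
def lat (d : ℕ) : Submodule ℤ A := Submodule.span ℤ (wd X n d '' Set.Iio (n ^ d))

/-- The sum of the words of degree `d` whose codes are the positions of the set bits of `m`. -/
def psi (d m : ℕ) : A := ∑ c ∈ Finset.range (n ^ d), if m.testBit c then wd X n d c else 0

/-- The bit vector `m` represents `y`, modulo twice the group generated by the words of degree `d`. -/
def Rep (d m : ℕ) (y : A) : Prop :=
  m < 2 ^ n ^ d ∧ ∃ z ∈ lat X n d, psi X n d m = y + (2 : ℤ) • z

/-- The words with codes in `N` generate the group of words of degree `d` modulo twice this group. -/
def Spn (d : ℕ) (N : List ℕ) : Prop :=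
  lat X n d ≤ Submodule.span ℤ (wd X n d '' {u | u ∈ N}) ⊔ Ideal.span {(2 : ℤ)} • lat X n d

variable {X n}

theorem wd_mem_lat {d c : ℕ} (hc : c < n ^ d) : wd X n d c ∈ lat X n d :=
  Submodule.subset_span ⟨c, hc, rfl⟩

theorem wd_succ {d i c : ℕ} (hc : c < n ^ d) :
    wd X n (d + 1) (i * n ^ d + c) = X i * wd X n d c := by
  have hpos : 0 < n ^ d := by omega
  rw [wd, mul_comm i, Nat.mul_add_div hpos, Nat.mul_add_mod, Nat.div_eq_of_lt hc,
    Nat.mod_eq_of_lt hc, add_zero]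

theorem code_lt {d i c : ℕ} (hi : i < n) (hc : c < n ^ d) : i * n ^ d + c < n ^ (d + 1) := by
  calc i * n ^ d + c < (i + 1) * n ^ d := by rw [add_mul]; omega
    _ ≤ n * n ^ d := Nat.mul_le_mul_right _ hi
    _ = n ^ (d + 1) := by ring

theorem mul_mem_lat {d i : ℕ} (hi : i < n) {y : A} (hy : y ∈ lat X n d) :
    X i * y ∈ lat X n (d + 1) := by
  have : (lat X n d).map (LinearMap.mulLeft ℤ (X i)) ≤ lat X n (d + 1) := by
    rw [lat, Submodule.map_span, Submodule.span_le]
    rintro _ ⟨_, ⟨c, hc, rfl⟩, rfl⟩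
    rw [LinearMap.mulLeft_apply, ← wd_succ hc]
    exact wd_mem_lat (code_lt hi hc)
  exact this ⟨y, hy, rfl⟩

theorem psi_mem_lat (d m : ℕ) : psi X n d m ∈ lat X n d := by
  refine Submodule.sum_mem _ fun c hc => ?_
  split_ifs
  · exact wd_mem_lat (Finset.mem_range.1 hc)
  · exact Submodule.zero_mem _

/-- Exclusive or is addition modulo 2; the carry is twice the sum over the common bits. -/
theorem psi_xor (d a b : ℕ) :
    psi X n d (a ^^^ b) = psi X n d a + psi X n d b + (2 : ℤ) • -psi X n d (a &&& b) := by
  rw [psi, psi, psi, psi, smul_neg, Finset.smul_sum, ← Finset.sum_add_distrib, ← sub_eq_add_neg,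
    ← Finset.sum_sub_distrib]
  refine Finset.sum_congr rfl fun c _ => ?_
  rw [Nat.testBit_xor, Nat.testBit_and]
  cases a.testBit c <;> cases b.testBit c <;> simp [two_smul]

theorem Rep.zero (d : ℕ) : Rep X n d 0 0 :=
  ⟨by positivity, 0, Submodule.zero_mem _, by simp [psi]⟩

theorem Rep.xor {d a b : ℕ} {y z : A} (ha : Rep X n d a y) (hb : Rep X n d b z) :
    Rep X n d (a ^^^ b) (y + z) := by
  obtain ⟨ha, u, hu, hu'⟩ := ha
  obtain ⟨hb, v, hv, hv'⟩ := hb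
  refine ⟨Nat.xor_lt_two_pow ha hb, u + v - psi X n d (a &&& b),
    Submodule.sub_mem _ (Submodule.add_mem _ hu hv) (psi_mem_lat _ _), ?_⟩
  rw [psi_xor, hu', hv']
  simp only [smul_add, smul_sub, smul_neg]
  abel

/-- Left multiplication by the letter `X i` adds `i * n ^ d` to all codes, which is a bit shift. -/
theorem psi_shift {d m i : ℕ} (hi : i < n) (hm : m < 2 ^ n ^ d) :
    psi X n (d + 1) (m <<< (i * n ^ d)) = X i * psi X n d m := by
  obtain ⟨k, rfl⟩ : ∃ k, n = i + (1 + k) := ⟨n - i - 1, by omega⟩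
  set n := i + (1 + k) with hn
  have e : n ^ (d + 1) = i * n ^ d + (n ^ d + k * n ^ d) := by
    rw [pow_succ, mul_comm]
    nth_rw 1 [hn]
    ring
  rw [psi, e, Finset.sum_range_add, Finset.sum_range_add, Finset.sum_eq_zero, zero_add,
    Finset.sum_eq_zero (s := Finset.range (k * n ^ d)), add_zero, psi, Finset.mul_sum]
  · refine Finset.sum_congr rfl fun c hc => ?_
    rw [Finset.mem_range] at hc
    rw [Nat.testBit_shiftLeft, wd_succ hc]
    simp
  · intro c _
    rw [Nat.testBit_shiftLeft, Nat.testBit_lt_two_pow (i := i * n ^ d + (n ^ d + c) - i * n ^ d)]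
    · simp
    · exact hm.trans_le (Nat.pow_le_pow_right (by norm_num) (by omega))
  · intro c hc
    rw [Finset.mem_range] at hc
    rw [Nat.testBit_shiftLeft]
    simp [hc]

theorem Rep.shift {d m i : ℕ} (hi : i < n) {y : A} (h : Rep X n d m y) :
    Rep X n (d + 1) (m <<< (i * n ^ d)) (X i * y) := by
  obtain ⟨hm, z, hz, h⟩ := h
  refine ⟨?_, X i * z, mul_mem_lat hi hz, ?_⟩
  · rw [Nat.shiftLeft_eq]
    calc m * 2 ^ (i * n ^ d) < 2 ^ n ^ d * 2 ^ (i * n ^ d) :=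
          Nat.mul_lt_mul_of_pos_right hm (by positivity)
      _ = 2 ^ ((i + 1) * n ^ d) := by rw [← pow_add]; ring_nf
      _ ≤ 2 ^ n ^ (d + 1) := by
          refine Nat.pow_le_pow_right (by norm_num) ?_
          rw [pow_succ, mul_comm (n ^ d)]
          exact Nat.mul_le_mul_right _ hi
  · rw [psi_shift hi hm, h, mul_add, mul_smul_comm]

theorem Rep.word {d c : ℕ} (hc : c < n ^ d) : Rep X n d (2 ^ c) (wd X n d c) := by
  refine ⟨Nat.pow_lt_pow_right (by norm_num) hc, 0, Submodule.zero_mem _, ?_⟩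
  rw [psi, smul_zero, add_zero, Finset.sum_eq_single c]
  · simp
  · intro b _ hb
    rw [Nat.testBit_two_pow_of_ne (Ne.symm hb)]
    simp
  · intro h
    exact absurd (Finset.mem_range.2 hc) h

theorem psi_mem_span {d m : ℕ} {N : List ℕ}
    (h : ∀ c < n ^ d, m.testBit c = true → c ∈ N) :
    psi X n d m ∈ Submodule.span ℤ (wd X n d '' {u | u ∈ N}) := by
  refine Submodule.sum_mem _ fun c hc => ?_
  split_ifs with hb
  · exact Submodule.subset_span ⟨c, h c (Finset.mem_range.1 hc) hb, rfl⟩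
  · exact Submodule.zero_mem _

theorem Spn.succ {d : ℕ} {N N' : List ℕ} (h : Spn X n d N)
    (hN : ∀ i < n, ∀ u ∈ N, X i * wd X n d u ∈
      Submodule.span ℤ (wd X n (d + 1) '' {u | u ∈ N'}) ⊔
        Ideal.span {(2 : ℤ)} • lat X n (d + 1)) :
    Spn X n (d + 1) N' := by
  rw [Spn, lat, Submodule.span_le]
  rintro _ ⟨c, hc, rfl⟩
  have hc : c < n ^ (d + 1) := hc
  have hpos : 0 < n ^ d := by
    rcases Nat.eq_zero_or_pos (n ^ d) with h0 | h0
    · rw [pow_succ, h0, zero_mul] at hc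
      omega
    · exact h0
  have hi : c / n ^ d < n := by
    rw [Nat.div_lt_iff_lt_mul hpos, mul_comm, ← pow_succ]
    exact hc
  have hr : c % n ^ d < n ^ d := Nat.mod_lt _ hpos
  have hmap := Submodule.map_mono (f := LinearMap.mulLeft ℤ (X (c / n ^ d))) h
  have hin := hmap ⟨_, wd_mem_lat hr, rfl⟩
  rw [Submodule.map_sup, Submodule.map_smul''] at hin
  refine (sup_le ?_ ?_ : _ ≤ Submodule.span ℤ (wd X n (d + 1) '' {u | u ∈ N'}) ⊔
        Ideal.span {(2 : ℤ)} • lat X n (d + 1)) hin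
  · rw [Submodule.map_span, Submodule.span_le]
    rintro _ ⟨_, ⟨u, hu, rfl⟩, rfl⟩
    exact hN _ hi u hu
  · refine le_sup_of_le_right (Submodule.smul_mono le_rfl ?_)
    rintro _ ⟨y, hy, rfl⟩
    exact mul_mem_lat hi hy

/-- Nakayama's lemma for the ideal `2ℤ`: the multiplier `r` is odd, hence nonzero. -/
theorem Spn.lat_le {d : ℕ} {N : List ℕ} (h : Spn X n d N) :
    ∃ r : ℤ, r ≠ 0 ∧ ∀ y ∈ lat X n d, r • y ∈ Submodule.span ℤ (wd X n d '' {u | u ∈ N}) := by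
  have hfg : (lat X n d).FG := Submodule.fg_span ((Set.finite_Iio _).image _)
  obtain ⟨r, hr, hle⟩ := Submodule.exists_sub_one_mem_and_smul_le_of_fg_of_le_sup hfg le_rfl h
  refine ⟨r, ?_, fun y hy => hle (Submodule.smul_mem_pointwise_smul _ _ _ hy)⟩
  rintro rfl
  rw [Ideal.mem_span_singleton] at hr
  omega

end Words

/-! ### The elimination algorithm -/

/-- The application `k v`, written as a recursion on `v` so that the kernel evaluates `v` to a
numeral before substituting it. -/
def force {β : Type} (v : ℕ) (k : ℕ → β) : β :=
  Nat.rec (k 0) (fun m _ => k (Nat.add m 1)) v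

/-- Row `s` of the matrix over `𝔽₂` with rows of `w` bits encoded by `M`; row `0` occupies the lowest
bits. -/
def row (w M s : ℕ) : ℕ := (M >>> (w * s)) % 2 ^ w

/-- The matrix with rows `f 0, …, f (k - 1)` followed by the rows of `M`. -/
def pack (w : ℕ) (f : ℕ → ℕ) : ℕ → ℕ → ℕ
  | 0, M => M
  | k + 1, M => force (M <<< w + f k) (pack w f k)

/-- Gaussian elimination by the rows `k - 1, …, 0`, processed in this order; `ones` has the lowest bit
of every row set. For a nonzero row `v`, with lowest set bit `p = v ^^^ (v &&& (v - 1))`, the division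
of `M` by `p` moves column `p` to the lowest column, `2 ^ (w * k)` removes the row `v` itself from the
rows to be treated, and the product with `v` places a copy of `v` in each remaining row containing
`p`. -/
def elim (w ones : ℕ) : ℕ → ℕ → ℕ
  | 0, M => M
  | k + 1, M =>
    force (row w M k) fun v =>
      bif Nat.beq v 0 then elim w ones k M
      else force (M ^^^ ((M / (v ^^^ (v &&& (v - 1))) ^^^ 2 ^ (w * k)) &&& ones) * v) (elim w ones k)

/-- The data kept in degree `d`: the list `nw` of codes of words generating this degree modulo 2, and
a matrix `mat` whose rows from `off` on represent the elements `x_j u`, where `u` runs through the `cnt`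
generating words of the preceding degree. -/
structure St where
  cnt : ℕ
  off : ℕ
  mat : ℕ
  nw : List ℕ

/-- The row representing the letter `j` times the `a`-th generating word of the preceding degree. -/
def St.entry (st : St) (n s a j : ℕ) : ℕ := row s st.mat (st.off + (a * n + j))

/-- The vector of `∑ x_i x_j y`, summed over the pairs `(i, j)` in `p`, when `f j` is the vector of
`x_j y`, of length `s`. -/
def relRow (s : ℕ) (f : ℕ → ℕ) (p : List (ℕ × ℕ)) : ℕ :=
    p.foldr (fun ij v => (f ij.2 <<< (ij.1 * s)) ^^^ v) 0

/-- The rows of the matrix to be reduced: first the relations `p_i y = 0` for the generating words `y`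
of degree `d - 1`, then, from index `off` on, the targets `x_j u` for the generating words `u` of
degree `d`. -/
def rowAt (n : ℕ) (rels : List (List (ℕ × ℕ))) (s off : ℕ) (st : St) (q : ℕ) : ℕ :=
  bif Nat.ble off q then 2 ^ ((q - off) % n * s + st.nw.getD ((q - off) / n) 0)
  else relRow s (st.entry n s (q / rels.length)) (rels.getD (q % rels.length) [])

/-- The state with reduced matrix `mat`: its generating words are those that occur in some target
row. -/
def nextSt (n w cnt off mat : ℕ) : St where
  cnt := cnt
  off := off
  mat := mat
  nw := force (Nat.rec 0 (fun q m => m ||| row w mat (off + q)) (cnt * n)) fun mask =>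
    (List.range w).filter mask.testBit

/-- The passage from degree `d` to degree `d + 1`, where `s = n ^ d`. -/
def step (n : ℕ) (rels : List (List (ℕ × ℕ))) (s : ℕ) (st : St) : St :=
  force (n * s) fun w =>
  force st.nw.length fun cnt =>
  force (st.cnt * rels.length) fun off =>
  force (pack w (fun _ => 1) (off + cnt * n) 0) fun ones =>
  force (pack w (rowAt n rels s off st) (off + cnt * n) 0) fun M =>
  force (elim w ones off M) fun M' => nextSt n w cnt off M'

/-- The result of the elimination in degree `d + 1`. -/
def state (n : ℕ) (rels : List (List (ℕ × ℕ))) : ℕ → St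
  | 0 => ⟨1, 0, pack n (2 ^ ·) n 0, List.range n⟩
  | d + 1 => step n rels (n ^ (d + 1)) (state n rels d)

/-! ### The relations for `3 ≤ n ≤ 7` -/

/-- Three relations in three variables. A list of pairs `(k, j)` stands for the sum of the monomials
`x_k x_j`; likewise below. -/
def rels3 : List (List (ℕ × ℕ)) := [
  [(0, 0), (0, 2), (2, 2)],
  [(1, 0), (1, 1), (2, 0)],
  [(1, 2), (2, 0), (2, 1)]]

def rels4 : List (List (ℕ × ℕ)) := [
  [(0, 0), (0, 1), (2, 1)],
  [(0, 0), (1, 0), (2, 2)],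
  [(0, 0), (1, 2), (3, 2)],
  [(0, 2), (1, 3), (3, 0)],
  [(0, 3), (1, 1), (2, 1)],
  [(1, 1), (1, 2), (3, 3)]]

def rels5 : List (List (ℕ × ℕ)) := [
  [(0, 0), (0, 2), (0, 4), (2, 1), (4, 4)],
  [(0, 0), (0, 4), (1, 3), (2, 1), (3, 2)],
  [(0, 1), (1, 2), (1, 3), (2, 3), (3, 1)],
  [(0, 2), (0, 3), (1, 4), (2, 0), (2, 3)],
  [(0, 2), (0, 4), (1, 3), (4, 1), (4, 3)],
  [(0, 2), (1, 2), (2, 2), (2, 4), (3, 2)],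
  [(0, 2), (3, 3), (4, 0), (4, 2), (4, 4)],
  [(0, 3), (1, 0), (2, 3), (3, 0), (3, 2)],
  [(0, 4), (1, 4), (2, 0), (2, 2), (3, 0)],
  [(1, 1), (2, 1), (3, 0), (4, 3), (4, 4)]]

def rels6 : List (List (ℕ × ℕ)) := [
  [(0, 0), (0, 1), (0, 2), (4, 5), (5, 1)],
  [(0, 0), (2, 4), (3, 1), (3, 2), (4, 5)],
  [(0, 1), (1, 1), (1, 3), (2, 4), (4, 0)],
  [(0, 2), (0, 4), (0, 5), (1, 1), (5, 4)],
  [(0, 3), (1, 1), (1, 2), (3, 4), (5, 5)],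
  [(0, 4), (1, 1), (2, 5), (3, 1), (4, 1)],
  [(0, 4), (3, 1), (4, 5), (5, 3), (5, 4)],
  [(0, 5), (1, 3), (3, 4), (4, 3), (4, 4)],
  [(0, 5), (2, 1), (2, 4), (3, 2), (4, 5)],
  [(1, 1), (2, 2), (4, 2), (4, 4), (5, 3)],
  [(1, 2), (1, 5), (2, 0), (4, 1), (5, 3)],
  [(1, 3), (4, 0), (4, 5), (5, 1), (5, 3)],
  [(1, 4), (1, 5), (2, 3), (2, 4), (4, 4)],
  [(1, 4), (3, 4), (4, 4), (5, 1), (5, 2)],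
  [(2, 4), (2, 5), (3, 3), (3, 5), (5, 0)]]

def rels7 : List (List (ℕ × ℕ)) := [
  [(0, 0), (0, 3), (1, 2), (3, 2), (4, 3)],
  [(0, 0), (0, 6), (3, 6), (6, 2), (6, 5)],
  [(0, 0), (1, 2), (1, 4), (4, 6), (6, 3)],
  [(0, 1), (1, 2), (3, 4), (3, 5), (4, 0)],
  [(0, 1), (2, 0), (4, 0), (4, 2), (5, 0)],
  [(0, 2), (0, 3), (1, 5), (2, 5), (3, 6)],
  [(0, 2), (1, 3), (1, 5), (4, 6), (6, 1)],
  [(0, 4), (0, 6), (2, 4), (4, 4), (4, 6)],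
  [(0, 5), (2, 3), (6, 1), (6, 2), (6, 6)],
  [(0, 5), (2, 6), (4, 1), (5, 0), (6, 4)],
  [(0, 6), (3, 2), (5, 3), (5, 5), (6, 3)],
  [(1, 0), (1, 3), (3, 3), (3, 4), (6, 4)],
  [(1, 1), (1, 5), (1, 6), (3, 3), (6, 2)],
  [(1, 2), (2, 4), (3, 2), (3, 6), (5, 5)],
  [(1, 3), (3, 4), (3, 5), (3, 6), (4, 6)],
  [(1, 5), (2, 2), (2, 6), (5, 2), (6, 3)],
  [(1, 5), (2, 3), (4, 1), (4, 5), (6, 2)],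
  [(1, 5), (4, 0), (6, 3), (6, 4), (6, 5)],
  [(2, 0), (3, 5), (3, 6), (5, 0), (6, 0)],
  [(2, 2), (3, 0), (4, 0), (5, 1), (5, 3)],
  [(3, 2), (4, 2), (5, 3), (6, 4), (6, 6)]]

/-! ### Soundness of the elimination -/

section Soundness

theorem force_eq {β : Type} (v : ℕ) (k : ℕ → β) : force v k = k v := by
  cases v <;> rfl

theorem row_lt (w M s : ℕ) : row w M s < 2 ^ w := Nat.mod_lt _ (by positivity)

theorem row_zero (w M : ℕ) : row w M 0 = M % 2 ^ w := by simp [row]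

theorem row_succ (w M s : ℕ) : row w M (s + 1) = row w (M / 2 ^ w) s := by
  rw [row, row, ← Nat.shiftRight_eq_div_pow, ← Nat.shiftRight_add, mul_add, mul_one, add_comm]

theorem row_zero_left (w s : ℕ) : row w 0 s = 0 := by simp [row]

theorem row_xor (w M N s : ℕ) : row w (M ^^^ N) s = row w M s ^^^ row w N s := by
  rw [row, row, row, Nat.shiftRight_xor_distrib, Nat.xor_mod_two_pow]

theorem row_and (w M N s : ℕ) : row w (M &&& N) s = row w M s &&& row w N s := by
  rw [row, row, row, Nat.shiftRight_and_distrib, Nat.and_mod_two_pow]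

theorem row_pack (w : ℕ) (f : ℕ → ℕ) (k M s : ℕ) (hf : ∀ i < k, f i < 2 ^ w) :
    row w (pack w f k M) s = if s < k then f s else row w M (s - k) := by
  induction k generalizing M with
  | zero => simp [pack]
  | succ k ih =>
    have hk := hf k (by omega)
    rw [pack, force_eq, ih _ fun i hi => hf i (by omega), Nat.shiftLeft_eq]
    rcases lt_trichotomy s k with h | h | h
    · rw [if_pos h, if_pos (by omega)]
    · subst h
      rw [if_neg (by omega), if_pos (by omega), Nat.sub_self, row_zero, Nat.mul_add_mod',
        Nat.mod_eq_of_lt hk]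
    · obtain ⟨t, rfl⟩ : ∃ t, s = k + 1 + t := ⟨s - (k + 1), by omega⟩
      rw [if_neg (by omega), if_neg (by omega), show k + 1 + t - k = t + 1 by omega, row_succ,
        Nat.add_sub_cancel_left, mul_comm, Nat.mul_add_div (by positivity),
        Nat.div_eq_of_lt hk, add_zero]

/-- A product with a matrix whose rows are `0` or `1` involves no carry between rows. -/
theorem row_mul (w v s : ℕ) (hv : v < 2 ^ w) (e : ℕ) (he : ∀ t, row w e t ≤ 1) :
    row w (e * v) s = row w e s * v := by
  have h0 : e % 2 ^ w ≤ 1 := by rw [← row_zero]; exact he 0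
  have hb : e % 2 ^ w * v < 2 ^ w := by
    refine lt_of_le_of_lt (Nat.mul_le_mul_right _ h0) ?_
    omega
  have hev : e * v = 2 ^ w * (e / 2 ^ w * v) + e % 2 ^ w * v := by
    conv_lhs => rw [← Nat.div_add_mod e (2 ^ w)]
    ring
  induction s generalizing e with
  | zero => rw [row_zero, row_zero, hev, Nat.mul_add_mod, Nat.mod_eq_of_lt hb]
  | succ s ih =>
    rw [row_succ, row_succ, hev, Nat.mul_add_div (by positivity), Nat.div_eq_of_lt hb, add_zero]
    have he' : ∀ t, row w (e / 2 ^ w) t ≤ 1 := fun t => by rw [← row_succ]; exact he _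
    have h0' : e / 2 ^ w % 2 ^ w ≤ 1 := by rw [← row_zero]; exact he' 0
    refine ih _ he' h0' ?_ ?_
    · refine lt_of_le_of_lt (Nat.mul_le_mul_right _ h0') ?_
      omega
    · conv_lhs => rw [← Nat.div_add_mod (e / 2 ^ w) (2 ^ w)]
      ring

variable {A : Type} [Ring A] {X : ℕ → A} {n : ℕ}

/-- Elimination by rows representing `0` does not change the elements represented by the rows. This
holds for any choice of the rows to which `v` is added, so the choice of pivot plays no role. -/
theorem elim_rep (d ones k M : ℕ) (Y : ℕ → A) (hones : ∀ t, row (n ^ d) ones t ≤ 1)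
    (hY : ∀ q < k, Y q = 0) (hM : ∀ q, Rep X n d (row (n ^ d) M q) (Y q)) (q : ℕ) :
    Rep X n d (row (n ^ d) (elim (n ^ d) ones k M) q) (Y q) := by
  induction k generalizing M with
  | zero => exact hM q
  | succ k ih =>
    rw [elim, force_eq]
    cases hb : Nat.beq (row (n ^ d) M k) 0 with
    | true => exact ih M (fun q hq => hY q (by omega)) hM
    | false =>
      rw [cond_false, force_eq]
      refine ih _ (fun q hq => hY q (by omega)) fun q => ?_
      set e := (M / (row (n ^ d) M k ^^^ (row (n ^ d) M k &&& (row (n ^ d) M k - 1))) ^^^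
        2 ^ (n ^ d * k)) &&& ones with he
      have hle : ∀ t, row (n ^ d) e t ≤ 1 := fun t => by
        rw [he, row_and]
        exact Nat.and_le_right.trans (hones t)
      rw [row_xor, row_mul _ _ _ (row_lt _ _ _) _ hle]
      have h1 := hle q
      have h01 : row (n ^ d) e q = 0 ∨ row (n ^ d) e q = 1 := by omega
      rcases h01 with h | h
      · rw [h, zero_mul, Nat.xor_zero]
        exact hM q
      · rw [h, one_mul, ← add_zero (Y q), ← hY k (by omega)]
        exact (hM q).xor (hM k)

theorem relRow_rep {d : ℕ} {f : ℕ → ℕ} {y : A} (p : List (ℕ × ℕ))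
    (hf : ∀ j < n, Rep X n d (f j) (X j * y)) (hp : ∀ ij ∈ p, ij.1 < n ∧ ij.2 < n) :
    Rep X n (d + 1) (relRow (n ^ d) f p) ((p.map fun ij => X ij.1 * X ij.2).sum * y) := by
  induction p with
  | nil => simpa [relRow] using Rep.zero _
  | cons ij p ih =>
    have h := hp ij (by simp)
    have h2 := ih fun ij hij => hp ij (by simp [hij])
    have h3 := ((hf _ h.2).shift h.1).xor h2
    rw [List.map_cons, List.sum_cons, add_mul, mul_assoc]
    exact h3

/-- The invariant of the elimination: the rows of the matrix from `off` on represent the products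
`X j * y`, and the listed words generate degree `d + 1` modulo 2. -/
structure Inv (X : ℕ → A) (n d : ℕ) (st : St) : Prop where
  entry : ∀ a < st.cnt, ∃ y, ∀ j < n, Rep X n (d + 1) (st.entry n (n ^ (d + 1)) a j) (X j * y)
  lt : ∀ u ∈ st.nw, u < n ^ (d + 1)
  spn : Spn X n (d + 1) st.nw

theorem inv_zero (rels : List (List (ℕ × ℕ))) : Inv X n 0 (state n rels 0) where
  entry := by
    intro a ha
    have ha : a < 1 := ha
    obtain rfl : a = 0 := by omega
    refine ⟨1, fun j hj => ?_⟩
    rw [state, St.entry]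
    simp only [zero_add, zero_mul, pow_one]
    rw [row_pack _ _ _ _ _ fun i hi => Nat.pow_lt_pow_right (by norm_num) hi, if_pos hj]
    have := Rep.word (X := X) (n := n) (d := 1) (c := j) (by simpa using hj)
    simpa [wd] using this
  lt := by
    intro u hu
    simpa [state] using hu
  spn := by
    refine le_sup_of_le_left (Submodule.span_mono ?_)
    rintro _ ⟨c, hc, rfl⟩
    exact ⟨c, by simpa [state] using hc, rfl⟩

theorem mem_nextSt_nw {n w cnt off mat c q : ℕ} (hc : c < w) (hq : q < cnt * n)
    (h : (row w mat (off + q)).testBit c = true) : c ∈ (nextSt n w cnt off mat).nw := by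
  rw [nextSt]
  simp only [force_eq]
  rw [List.mem_filter, List.mem_range]
  refine ⟨hc, ?_⟩
  generalize cnt * n = N at hq
  induction N with
  | zero => omega
  | succ N ih =>
    change (Nat.rec 0 (fun q m => m ||| row w mat (off + q)) N ||| row w mat (off + N)).testBit c
      = true
    rw [Nat.testBit_or, Bool.or_eq_true]
    rcases Nat.lt_succ_iff_lt_or_eq.1 hq with h' | h'
    · exact Or.inl (ih h')
    · subst h'
      exact Or.inr h

theorem nextSt_nw_lt {n w cnt off mat c : ℕ} (h : c ∈ (nextSt n w cnt off mat).nw) : c < w := by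
  rw [nextSt] at h
  simp only [force_eq] at h
  rw [List.mem_filter, List.mem_range] at h
  exact h.1

theorem nextSt_nw_nil (n w off mat : ℕ) : (nextSt n w 0 off mat).nw = [] := by
  rw [nextSt]
  simp only [force_eq, zero_mul]
  simp

theorem step_eq (n : ℕ) (rels : List (List (ℕ × ℕ))) (s : ℕ) (st : St) :
    step n rels s st = nextSt n (n * s) st.nw.length (st.cnt * rels.length)
      (elim (n * s) (pack (n * s) (fun _ => 1) (st.cnt * rels.length + st.nw.length * n) 0)
        (st.cnt * rels.length)
        (pack (n * s) (rowAt n rels s (st.cnt * rels.length) st)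
          (st.cnt * rels.length + st.nw.length * n) 0)) := by
  simp only [step, force_eq]

/-- Once no generating word is left, none is left in later degrees. -/
theorem state_nw_nil {n : ℕ} {rels : List (List (ℕ × ℕ))} {d : ℕ}
    (h : (state n rels d).nw = []) (e : ℕ) : (state n rels (d + e)).nw = [] := by
  induction e with
  | zero => exact h
  | succ e ih =>
    rw [← add_assoc, state, step_eq, ih]
    exact nextSt_nw_nil _ _ _ _

theorem inv_step {rels : List (List (ℕ × ℕ))} (hlt : ∀ p ∈ rels, ∀ ij ∈ p, ij.1 < n ∧ ij.2 < n)
    (hrel : ∀ p ∈ rels, (p.map fun ij => X ij.1 * X ij.2).sum = 0) (hn : 0 < n)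
    {d : ℕ} {st : St} (h : Inv X n d st) :
    Inv X n (d + 1) (step n rels (n ^ (d + 1)) st) := by
  rw [step_eq, show n * n ^ (d + 1) = n ^ (d + 1 + 1) by rw [pow_succ n (d + 1), mul_comm]]
  set w := n ^ (d + 1 + 1) with hw
  set off := st.cnt * rels.length with hoff
  set cnt := st.nw.length with hcnt
  set ones := pack w (fun _ => 1) (off + cnt * n) 0 with hones
  set M := pack w (rowAt n rels (n ^ (d + 1)) off st) (off + cnt * n) 0 with hM
  have hones1 : ∀ t, row w ones t ≤ 1 := by
    intro t
    rw [hones, row_pack]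
    · split_ifs
      · exact le_rfl
      · rw [row_zero_left]
        exact zero_le_one
    · intro _ _
      exact Nat.one_lt_two_pow (by positivity)
  -- The elements represented by the rows: `0` for relation rows, `x_j u` for target rows.
  let Y : ℕ → A := fun q => if off ≤ q ∧ q < off + cnt * n then
    X ((q - off) % n) * wd X n (d + 1) (st.nw.getD ((q - off) / n) 0) else 0
  have hrow : ∀ q < off + cnt * n, Rep X n (d + 1 + 1) (rowAt n rels (n ^ (d + 1)) off st q) (Y q) := by
    intro q hq
    rw [rowAt]
    by_cases hq' : off ≤ q
    · rw [Nat.ble_eq_true_of_le hq', cond_true]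
      simp only [Y, if_pos (And.intro hq' hq)]
      have hdiv : (q - off) / n < st.nw.length := by
        rw [Nat.div_lt_iff_lt_mul hn]
        change q - off < cnt * n
        omega
      have hu : st.nw.getD ((q - off) / n) 0 < n ^ (d + 1) := by
        rw [List.getD_eq_getElem _ _ hdiv]
        exact h.lt _ (List.getElem_mem _)
      rw [← wd_succ hu]
      exact Rep.word (code_lt (Nat.mod_lt _ hn) hu)
    · have hb : Nat.ble off q = false := by
        rw [Bool.eq_false_iff]
        exact fun hb => hq' (Nat.le_of_ble_eq_true hb)
      rw [hb, cond_false]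
      simp only [Y, if_neg (fun hh : off ≤ q ∧ q < off + cnt * n => hq' hh.1)]
      have hq2 : q < st.cnt * rels.length := by omega
      have hpos : 0 < rels.length := by
        rcases Nat.eq_zero_or_pos rels.length with h0 | h0
        · rw [h0, mul_zero] at hq2
          omega
        · exact h0
      obtain ⟨y, hy⟩ := h.entry (q / rels.length) ((Nat.div_lt_iff_lt_mul hpos).2 hq2)
      have hmem : rels.getD (q % rels.length) [] ∈ rels := by
        rw [List.getD_eq_getElem _ _ (Nat.mod_lt _ hpos)]
        exact List.getElem_mem _
      have := relRow_rep (rels.getD (q % rels.length) []) hy (hlt _ hmem)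
      rw [hrel _ hmem, zero_mul] at this
      exact this
  have hrep : ∀ q, Rep X n (d + 1 + 1) (row w M q) (Y q) := by
    intro q
    rw [hM, row_pack _ _ _ _ _ fun i hi => (hrow i hi).1]
    split_ifs with hq
    · exact hrow q hq
    · rw [row_zero_left]
      simp only [Y, if_neg (fun hh : off ≤ q ∧ q < off + cnt * n => hq hh.2)]
      exact Rep.zero _
  have helim := elim_rep (d + 1 + 1) ones off M Y hones1
    (fun q hq => if_neg fun hh => absurd hh.1 (by omega)) hrep
  have hlt' : ∀ a < cnt, ∀ j < n, a * n + j < cnt * n := by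
    intro a ha j hj
    calc a * n + j < (a + 1) * n := by rw [add_mul]; omega
      _ ≤ cnt * n := Nat.mul_le_mul_right _ ha
  have hYe : ∀ a < cnt, ∀ j < n,
      Y (off + (a * n + j)) = X j * wd X n (d + 1) (st.nw.getD a 0) := by
    intro a ha j hj
    have h1 := hlt' a ha j hj
    simp only [Y]
    rw [if_pos ⟨by omega, by omega⟩, Nat.add_sub_cancel_left, Nat.mul_add_mod',
      Nat.mod_eq_of_lt hj, mul_comm a n, Nat.mul_add_div hn, Nat.div_eq_of_lt hj, add_zero]
  refine ⟨?_, ?_, ?_⟩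
  · intro a ha
    refine ⟨wd X n (d + 1) (st.nw.getD a 0), fun j hj => ?_⟩
    rw [← hYe a ha j hj]
    exact helim _
  · intro u hu
    exact nextSt_nw_lt hu
  · refine h.spn.succ fun i hi u hu => ?_
    obtain ⟨a, ha, rfl⟩ := List.getElem_of_mem hu
    have h1 := helim (off + (a * n + i))
    rw [hYe a ha i hi, List.getD_eq_getElem _ _ ha] at h1
    obtain ⟨-, z, hz, h1⟩ := h1
    rw [eq_sub_of_add_eq h1.symm]
    refine Submodule.sub_mem _ (Submodule.mem_sup_left (psi_mem_span fun c hc hb => ?_))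
      (Submodule.mem_sup_right (Submodule.smul_mem_smul (Ideal.mem_span_singleton_self _) hz))
    exact mem_nextSt_nw hc (hlt' a ha i hi) hb

theorem inv_state {rels : List (List (ℕ × ℕ))} (hlt : ∀ p ∈ rels, ∀ ij ∈ p, ij.1 < n ∧ ij.2 < n)
    (hrel : ∀ p ∈ rels, (p.map fun ij => X ij.1 * X ij.2).sum = 0) (hn : 0 < n) :
    ∀ d, Inv X n d (state n rels d)
  | 0 => inv_zero rels
  | d + 1 => inv_step hlt hrel hn (inv_state hlt hrel hn d)

end Soundness

/-! ### The upper bound from the elimination -/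

section UpperBound

variable {K : Type} [Field K]

theorem quadDim_le_of_forall {n r : ℕ} {α : Fin r → Fin n → Fin n → K} {d : ℕ}
    (S : Finset (RingQuot (quadRel K n r α)))
    (h : ∀ w : Fin d → Fin n, RingQuot.mkAlgHom K (quadRel K n r α) (quadMonomial K w) ∈
      Submodule.span K (S : Set (RingQuot (quadRel K n r α)))) :
    quadDim K n r α d ≤ S.card := by
  refine le_trans (Submodule.finrank_mono (Submodule.span_le.2 ?_)) (finrank_span_finset_le_card S)
  rintro _ ⟨w, rfl⟩
  exact h w

/-- The image of the variable `x_i` in `A(α)`, and `0` if `i` is out of range. -/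
def gen (n r : ℕ) (α : Fin r → Fin n → Fin n → K) (i : ℕ) : RingQuot (quadRel K n r α) :=
  if h : i < n then RingQuot.mkAlgHom K (quadRel K n r α) (FreeAlgebra.ι K ⟨i, h⟩) else 0

theorem gen_fin (n r : ℕ) (α : Fin r → Fin n → Fin n → K) (i : Fin n) :
    gen n r α i = RingQuot.mkAlgHom K (quadRel K n r α) (FreeAlgebra.ι K i) := by
  rw [gen, dif_pos i.2]

theorem mkAlgHom_quadMonomial_succ {n r d : ℕ} (α : Fin r → Fin n → Fin n → K)
    (w : Fin (d + 1) → Fin n) :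
    RingQuot.mkAlgHom K (quadRel K n r α) (quadMonomial K w) =
      gen n r α (w 0) *
        RingQuot.mkAlgHom K (quadRel K n r α) (quadMonomial K fun i => w i.succ) := by
  rw [gen_fin, ← map_mul, quadMonomial, quadMonomial, List.ofFn_succ, List.map_cons,
    List.prod_cons]

theorem mkAlgHom_quadMonomial {n r : ℕ} (α : Fin r → Fin n → Fin n → K) (d : ℕ)
    (w : Fin d → Fin n) : ∃ c < n ^ d,
    RingQuot.mkAlgHom K (quadRel K n r α) (quadMonomial K w) = wd (gen n r α) n d c := by
  induction d with
  | zero => exact ⟨0, by simp, by simp [quadMonomial, wd]⟩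
  | succ d ih =>
    obtain ⟨c, hc, h⟩ := ih fun i => w i.succ
    refine ⟨w 0 * n ^ d + c, code_lt (w 0).2 hc, ?_⟩
    rw [wd_succ hc, mkAlgHom_quadMonomial_succ, h]

theorem gen_relation {n r : ℕ} (α : Fin r → Fin n → Fin n → K) (i : Fin r) :
    ∑ k : Fin n, ∑ j : Fin n, α i k j • (gen n r α k * gen n r α j) = 0 := by
  have := RingQuot.mkAlgHom_rel K (s := quadRel K n r α) ⟨⟨i, rfl⟩, rfl⟩
  simpa [gen_fin] using this

theorem sum_count {A : Type} [Ring A] [Algebra K A] (n : ℕ) (X : ℕ → A) (p : List (ℕ × ℕ))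
    (hp : ∀ ij ∈ p, ij.1 < n ∧ ij.2 < n) :
    (p.map fun ij => X ij.1 * X ij.2).sum =
      ∑ k : Fin n, ∑ j : Fin n, (p.count ((k : ℕ), (j : ℕ)) : K) • (X k * X j) := by
  induction p with
  | nil => simp
  | cons a p ih =>
    obtain ⟨h1, h2⟩ := hp a (by simp)
    rw [List.map_cons, List.sum_cons, ih fun ij hij => hp ij (by simp [hij])]
    simp only [List.count_cons, Nat.cast_add, add_smul, Finset.sum_add_distrib]
    rw [add_comm]
    congr 1
    rw [Finset.sum_eq_single ⟨a.1, h1⟩, Finset.sum_eq_single ⟨a.2, h2⟩]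
    · simp
    · intro b _ hb
      have : ¬ a = (a.1, (b : ℕ)) := fun h => hb (Fin.ext (congrArg Prod.snd h).symm)
      simp [this]
    · simp
    · intro b _ hb
      refine Finset.sum_eq_zero fun j _ => ?_
      have : ¬ a = ((b : ℕ), (j : ℕ)) := fun h => hb (Fin.ext (congrArg Prod.fst h).symm)
      simp [this]
    · simp

/-- The coefficient vector of a list of relations, each given as a list of pairs `(k, j)` standing for
monomials `x_k x_j`. -/
def coeffs (K : Type) [Field K] (n r : ℕ) (rels : List (List (ℕ × ℕ))) :
    Fin r → Fin n → Fin n → K :=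
  fun i k j => ((rels.getD i []).count ((k : ℕ), (j : ℕ)) : K)

theorem mem_span_of_zsmul_mem [CharZero K] {A : Type} [Ring A] [Algebra K A] {S : Set A} {t : ℤ}
    (ht : t ≠ 0) {y : A} (h : t • y ∈ Submodule.span ℤ S) : y ∈ Submodule.span K S := by
  have h2 : (t : K) • y ∈ Submodule.span K S := by
    rw [Int.cast_smul_eq_zsmul]
    exact Submodule.span_le_restrictScalars ℤ K _ h
  have htK : (t : K) ≠ 0 := Int.cast_ne_zero.2 ht
  have h4 := Submodule.smul_mem _ (t : K)⁻¹ h2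
  rwa [smul_smul, inv_mul_cancel₀ htK, one_smul] at h4

theorem quadDim_coeffs_le [CharZero K] {n r : ℕ} (hn : 0 < n) {rels : List (List (ℕ × ℕ))}
    (hr : rels.length = r) (hlt : ∀ p ∈ rels, ∀ ij ∈ p, ij.1 < n ∧ ij.2 < n) (d : ℕ) :
    quadDim K n r (coeffs K n r rels) (d + 1) ≤ (state n rels d).nw.length := by
  classical
  set X := gen n r (coeffs K n r rels) with hX
  have hrel : ∀ p ∈ rels, (p.map fun ij => X ij.1 * X ij.2).sum = 0 := by
    intro p hp
    obtain ⟨i, hi, rfl⟩ := List.getElem_of_mem hp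
    rw [sum_count (K := K) n X _ (hlt _ hp)]
    have := gen_relation (coeffs K n r rels) ⟨i, hr ▸ hi⟩
    simp only [coeffs, List.getD_eq_getElem _ _ hi] at this
    exact this
  obtain ⟨t, ht, hspan⟩ := (inv_state hlt hrel hn d).spn.lat_le
  refine (quadDim_le_of_forall ((state n rels d).nw.toFinset.image (wd X n (d + 1))) ?_).trans
    (Finset.card_image_le.trans (List.toFinset_card_le _))
  intro w
  obtain ⟨c, hc, h⟩ := mkAlgHom_quadMonomial (coeffs K n r rels) (d + 1) w
  rw [h]
  have hs : (((state n rels d).nw.toFinset.image (wd X n (d + 1)) : Finset _) : Set _) =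
      wd X n (d + 1) '' {u | u ∈ (state n rels d).nw} := by
    ext; simp
  rw [hs]
  exact mem_span_of_zsmul_mem ht (hspan _ (wd_mem_lat hc))

theorem anickC_eq {n d : ℕ} (h : ∀ e ≤ d, 0 ≤ anickA n e) : anickC n d = (anickA n d).toNat :=
  if_pos h

/-- If the elimination finds at most `a_{d+1}` generating words in degree `d + 1` for `d < D`, and none
in degree `D + 1`, then the corresponding algebra attains the Anick bound. -/
theorem exists_of_rels (K : Type) [Field K] [CharZero K] {n : ℕ} (hn : 0 < n)
    (rels : List (List (ℕ × ℕ))) (D : ℕ)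
    (hr : rels.length = n * (n - 1) / 2) (hlt : ∀ p ∈ rels, ∀ ij ∈ p, ij.1 < n ∧ ij.2 < n)
    (hpos : ∀ e ≤ D, 0 ≤ anickA n e)
    (hlen : ∀ d < D, (state n rels d).nw.length ≤ (anickA n (d + 1)).toNat)
    (hend : (state n rels D).nw.length = 0) :
    ∃ α : Fin (n * (n - 1) / 2) → Fin n → Fin n → K,
      ∀ d : ℕ, quadDim K n (n * (n - 1) / 2) α d = anickC n d := by
  refine ⟨coeffs K n _ rels, eq_anickC_of_le K n _ fun d => ?_⟩
  match d with
  | 0 =>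
    rw [quadDim_zero, anickC_eq fun e he => by
      obtain rfl : e = 0 := by omega
      simp [anickA]]
    simp [anickA]
  | d + 1 =>
    refine (quadDim_coeffs_le hn hr hlt d).trans ?_
    rcases lt_or_ge d D with h | h
    · rw [anickC_eq fun e he => hpos e (by omega)]
      exact hlen d h
    · obtain ⟨e, rfl⟩ := Nat.exists_eq_add_of_le h
      rw [state_nw_nil (List.eq_nil_of_length_eq_zero hend)]
      exact Nat.zero_le _

end UpperBound

/-! ### One and two generators -/

section SmallCases

variable (K : Type) [Field K]

theorem exists_one : ∃ α : Fin (1 * (1 - 1) / 2) → Fin 1 → Fin 1 → K,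
    ∀ d : ℕ, quadDim K 1 (1 * (1 - 1) / 2) α d = anickC 1 d := by
  refine ⟨fun _ _ _ => 0, eq_anickC_of_le K 1 _ fun d => ?_⟩
  have hA : ∀ e, anickA 1 e = 1 := by
    intro e
    induction e using Nat.strong_induction_on with
    | _ e ih =>
      match e, ih with
      | 0, _ => simp [anickA]
      | 1, _ => simp [anickA]
      | e + 2, ih => rw [anickA, ih (e + 1) (by omega), ih e (by omega)]; norm_num
  rw [anickC_eq fun e _ => by rw [hA]; norm_num, hA]
  refine quadDim_le_of_forall {RingQuot.mkAlgHom K _ (quadMonomial K fun _ : Fin d => 0)} fun w => ?_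
  rw [Subsingleton.elim w fun _ => 0]
  exact Submodule.subset_span (by simp)

/-- The relation `x_0 x_1 = 0` makes every monomial zero or of the form `x_1^a x_0^(d-a)`. -/
theorem exists_two : ∃ α : Fin (2 * (2 - 1) / 2) → Fin 2 → Fin 2 → K,
    ∀ d : ℕ, quadDim K 2 (2 * (2 - 1) / 2) α d = anickC 2 d := by
  classical
  refine ⟨fun _ k j => if k = 0 ∧ j = 1 then 1 else 0, eq_anickC_of_le K 2 _ fun d => ?_⟩
  set α : Fin (2 * (2 - 1) / 2) → Fin 2 → Fin 2 → K :=
    fun _ k j => if k = 0 ∧ j = 1 then 1 else 0 with hα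
  have hA : ∀ e, anickA 2 e = e + 1 := by
    intro e
    induction e using Nat.strong_induction_on with
    | _ e ih =>
      match e, ih with
      | 0, _ => simp [anickA]
      | 1, _ => simp [anickA]
      | e + 2, ih =>
        rw [anickA, ih (e + 1) (by omega), ih e (by omega)]
        push_cast
        norm_num
        ring
  rw [anickC_eq fun e _ => by rw [hA]; positivity, hA]
  set x := gen 2 _ α 0 with hx
  set y := gen 2 _ α 1 with hy
  have hxy : x * y = 0 := by
    have := gen_relation α ⟨0, by norm_num⟩
    simpa [hα, Fin.sum_univ_two] using this
  let S : ℕ → Finset (RingQuot (quadRel K 2 (2 * (2 - 1) / 2) α)) := fun d =>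
    (Finset.range (d + 1)).image fun a => y ^ a * x ^ (d - a)
  have hS : ∀ (d : ℕ) (w : Fin d → Fin 2),
      RingQuot.mkAlgHom K (quadRel K 2 (2 * (2 - 1) / 2) α) (quadMonomial K w) = 0 ∨
      ∃ a ≤ d, RingQuot.mkAlgHom K (quadRel K 2 (2 * (2 - 1) / 2) α) (quadMonomial K w) =
        y ^ a * x ^ (d - a) := by
    intro d
    induction d with
    | zero => exact fun w => Or.inr ⟨0, le_rfl, by simp [quadMonomial]⟩
    | succ d ih =>
      intro w
      rw [mkAlgHom_quadMonomial_succ]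
      rcases ih fun i => w i.succ with h | ⟨a, ha, h⟩
      · rw [h, mul_zero]
        exact Or.inl rfl
      · rw [h]
        have hw : w 0 = 0 ∨ w 0 = 1 := by omega
        rcases hw with hw | hw
        · rw [hw]
          change x * _ = 0 ∨ _
          rcases Nat.eq_zero_or_pos a with rfl | h0
          · refine Or.inr ⟨0, by omega, ?_⟩
            change x * (y ^ 0 * x ^ (d - 0)) = _
            simp [pow_succ']
          · obtain ⟨b, rfl⟩ : ∃ b, a = b + 1 := ⟨a - 1, by omega⟩
            left
            rw [pow_succ', mul_assoc, ← mul_assoc x, hxy, zero_mul]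
        · rw [hw]
          refine Or.inr ⟨a + 1, by omega, ?_⟩
          change y * _ = _
          rw [pow_succ', mul_assoc, Nat.add_sub_add_right]
  have := quadDim_le_of_forall (α := α) (S d) fun w => by
    rcases hS d w with h | ⟨a, ha, h⟩
    · rw [h]
      exact Submodule.zero_mem _
    · rw [h]
      refine Submodule.subset_span (Finset.mem_coe.2 (Finset.mem_image.2 ⟨a, ?_, rfl⟩))
      exact Finset.mem_range.2 (by omega)
  refine this.trans (Finset.card_image_le.trans ?_)
  rw [Finset.card_range]
  omega

end SmallCases

end Anick

set_option maxRecDepth 100000 in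
/-- Anick's conjecture for `n ≤ 7`: over a field of characteristic `0`,
for `1 ≤ n ≤ 7` and `r = n(n-1)/2` there is a coefficient vector `α` with
`dim_K A(α)_d = c_d` for all `d`; i.e. the Anick lower bound
`|(1 - nt + (n(n-1)/2)t²)^{-1}|` is attained. -/
theorem stmt3 (K : Type) [Field K] [CharZero K] (n : ℕ) (hn : 1 ≤ n) (hn7 : n ≤ 7) :
    ∃ α : Fin (n * (n - 1) / 2) → Fin n → Fin n → K,
      ∀ d : ℕ, quadDim K n (n * (n - 1) / 2) α d = anickC n d := by
  interval_cases n
  · exact Anick.exists_one K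
  · exact Anick.exists_two K
  · exact Anick.exists_of_rels K (by decide) Anick.rels3 4 (by decide +kernel) (by decide +kernel)
      (by decide +kernel) (by decide +kernel) (by decide +kernel)
  · exact Anick.exists_of_rels K (by decide) Anick.rels4 4 (by decide +kernel) (by decide +kernel)
      (by decide +kernel) (by decide +kernel) (by decide +kernel)
  · exact Anick.exists_of_rels K (by decide) Anick.rels5 3 (by decide +kernel) (by decide +kernel)
      (by decide +kernel) (by decide +kernel) (by decide +kernel)
  · exact Anick.exists_of_rels K (by decide) Anick.rels6 3 (by decide +kernel) (by decide +kernel)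
      (by decide +kernel) (by decide +kernel) (by decide +kernel)
  · exact Anick.exists_of_rels K (by decide) Anick.rels7 3 (by decide +kernel) (by decide +kernel)
      (by decide +kernel) (by decide +kernel) (by decide +kernel)
end
end

section
/- For every d ≥ 1 there exists a faithful representation of the semigroup Ω with m = 3^d generators on a set of size 3d: there exist maps σ_i (1 ≤ i ≤ 3^d) on the set N = {(k, ε) : 0 ≤ k ≤ d−1, ε ∈ {0,1,2}} of cardinality 3d, pairwise distinct, satisfying σ_i ∘ σ_j = σ_i for all i, j. (Such maps are given by σ_i(k, ε) = (k, ε_k(i)), where ε_k(i) is the k-th digit of i in base 3.) -/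
/-- for every `d ≥ 1` there is a faithful representation of the semigroup
`Ω` with `m = 3^d` generators on the set `N = {(k, ε) : 0 ≤ k ≤ d-1, ε ∈ {0,1,2}}` of
cardinality `3d`: pairwise distinct maps `σ_i : N → N` (`1 ≤ i ≤ 3^d`) with
`σ_i ∘ σ_j = σ_i` for all `i, j` (e.g. `σ_i (k, ε) = (k, ε_k(i))`, where `ε_k(i)` is the
`k`-th digit of `i` in base `3`). -/
theorem stmt10 (d : ℕ) (hd : 1 ≤ d) :
    ∃ σ : Fin (3 ^ d) → (Fin d × Fin 3) → (Fin d × Fin 3),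
      Function.Injective σ ∧ ∀ i j : Fin (3 ^ d), σ i ∘ σ j = σ i := by
  -- `finFunctionFinEquiv.symm i k` is the `k`-th base-3 digit of `i`.
  refine ⟨fun i p => (p.1, finFunctionFinEquiv.symm i p.1), fun i j h => ?_, fun i j => rfl⟩
  apply finFunctionFinEquiv.symm.injective
  funext k
  -- The second coordinate of `σ_i (k, 0)` recovers the `k`-th digit of `i`.
  exact congrArg Prod.snd (congrFun h (k, 0))
end

section
/- Suppose the pair (σ, τ) satisfies condition (C) at every point of N. If j ∉ Y₀ but σ(j) ∈ Y₀, then both images lie in Y₀ and σ, τ interchange them: τ(j) ∈ Y₀, and σ(σ(j)) = τ(σ(j)) = τ(j), and σ(τ(j)) = τ(τ(j)) = σ(j). -/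
/-- Condition (C) for a pair of maps `σ, τ : N → N` at a point `j`: either
(1) `σ(j) = τ(j)` and `σ(τ(j)) = τ(σ(j))`, or
(2) `τ(σ(j)) = τ(j)` and `σ(τ(j)) = σ(j)`. -/
def condC {N : Type*} (σ τ : N → N) (j : N) : Prop :=
  (σ j = τ j ∧ σ (τ j) = τ (σ j)) ∨ (τ (σ j) = τ j ∧ σ (τ j) = σ j)

/-- `Y₀ = {j ∈ N : σ(j) = τ(j)}`. -/
def Yzero {N : Type*} (σ τ : N → N) : Set N := {j | σ j = τ j}

/-- if `(σ, τ)` satisfies condition (C) everywhere and `j ∉ Y₀` but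
`σ(j) ∈ Y₀`, then both images lie in `Y₀` and `σ, τ` interchange them:
`τ(j) ∈ Y₀`, `σ(σ(j)) = τ(σ(j)) = τ(j)` and `σ(τ(j)) = τ(τ(j)) = σ(j)`. -/
theorem stmt12 (N : Type*) (σ τ : N → N) (h : ∀ j : N, condC σ τ j)
    (j : N) (hj : j ∉ Yzero σ τ) (hj1 : σ j ∈ Yzero σ τ) :
    τ j ∈ Yzero σ τ ∧
    σ (σ j) = τ j ∧ τ (σ j) = τ j ∧
    σ (τ j) = σ j ∧ τ (τ j) = σ j := by
  have ha : σ (σ j) = τ (σ j) := hj1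
  have hne : σ j ≠ τ j := hj
  -- Alternative (1) fails at `j`, so `τ (σ j) = τ j` and `σ (τ j) = σ j`.
  obtain ⟨h1, h2⟩ := (h j).resolve_left fun hc => hne hc.1
  have hb : τ (τ j) = σ j := by
    rcases h (σ j) with ⟨-, hc⟩ | ⟨-, hc⟩
    · rw [ha, h1, h2] at hc
      exact hc.symm
    -- Alternative (2) at `σ j` would force `σ j = σ (τ j) = σ (σ j) = τ j`.
    · rw [ha, h1, h2] at hc
      exact absurd hc hne
  exact ⟨h2.trans hb.symm, ha.trans h1, h1, h2, hb⟩
end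

section
/- Suppose the pair (σ, τ) satisfies condition (C) at every point of N. If j ∉ Y₀ but σ(j) ∈ Y₀, then j is not in the image of σ nor in the image of τ: there is no x ∈ N with σ(x) = j or τ(x) = j. -/
/-- if `(σ, τ)` satisfies condition (C) everywhere and `j ∉ Y₀` but
`σ(j) ∈ Y₀`, then `j` lies neither in the image of `σ` nor in the image of `τ`. -/
theorem stmt13 (N : Type*) (σ τ : N → N) (h : ∀ j : N, condC σ τ j)
    (j : N) (hj : j ∉ Yzero σ τ) (hj1 : σ j ∈ Yzero σ τ) :
    ¬ ∃ x : N, σ x = j ∨ τ x = j := by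
  change σ j ≠ τ j at hj
  change σ (σ j) = τ (σ j) at hj1
  -- Alternative (1) of (C) fails at `j`.
  obtain ⟨ha, hb⟩ : τ (σ j) = τ j ∧ σ (τ j) = σ j := (h j).resolve_left fun e => hj e.1
  -- (C) at `σ j`, where `σ (σ j) = τ (σ j) = τ j`: alternative (2) would give `σ j = τ j`.
  have hc : σ j = τ (τ j) := by
    rcases h (σ j) with ⟨-, e⟩ | ⟨-, e⟩
    · rwa [hj1, ha, hb] at e
    · rw [hj1, ha, hb] at e
      exact absurd e hj
  rintro ⟨x, rfl | rfl⟩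
  · rcases h x with ⟨e, e₂⟩ | ⟨e, e₂⟩
    · rw [← e] at e₂
      exact hj e₂
    -- `j = σ x` is a fixed point of `σ`, so `σ j ∈ Y₀` says `j ∈ Y₀`.
    · have hfix : σ (σ x) = σ x := by rw [← hb, e, e₂]
      rw [hfix, hfix] at hj1
      exact hj (hfix.trans hj1)
  · rcases h x with ⟨e, e₂⟩ | ⟨e, e₂⟩
    · rw [e] at e₂
      exact hj e₂
    -- `j = τ x` is a fixed point of `τ`, so `hc` reads `σ j = τ j`.
    · have hfix : τ (τ x) = τ x := by rw [← ha, e₂, e]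
      exact hj (by rw [hc, hfix, hfix])
end

section
/- Suppose the pair (σ, τ) satisfies condition (C) at every point of N. Set Ỹ₀ = Y₀ ∪ {j ∈ N : σ(j) ∈ Y₀} and P = N \ Ỹ₀. Then N splits as the disjoint union N = Ỹ₀ ⊔ P of two subsets each invariant under both σ and τ, and on P the semigroup relations hold: for every j ∈ P, σ(τ(j)) = σ(j) and τ(σ(j)) = τ(j) (so on P the maps have the structure of a representation of Ω: P is a disjoint union of subsets on each of which two points are picked, σ mapping the entire subset to one of them and τ to the other). -/
/-- `Ỹ₀ = Y₀ ∪ {j ∈ N : σ(j) ∈ Y₀}`. -/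
def Ytilde {N : Type*} (σ τ : N → N) : Set N :=
  Yzero σ τ ∪ {j | σ j ∈ Yzero σ τ}

/-- if `(σ, τ)` satisfies condition (C) everywhere, then `N` splits as the
disjoint union `N = Ỹ₀ ⊔ P` (`P = N \ Ỹ₀`) of two subsets, each invariant under both `σ`
and `τ`, and on `P` the semigroup relations hold: `σ(τ(j)) = σ(j)` and `τ(σ(j)) = τ(j)`
for every `j ∈ P` (so on `P` the maps have the structure of a representation of `Ω`). -/
theorem stmt14 (N : Type*) (σ τ : N → N) (h : ∀ j : N, condC σ τ j) :
    Set.MapsTo σ (Ytilde σ τ) (Ytilde σ τ) ∧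
    Set.MapsTo τ (Ytilde σ τ) (Ytilde σ τ) ∧
    Set.MapsTo σ ((Ytilde σ τ)ᶜ) ((Ytilde σ τ)ᶜ) ∧
    Set.MapsTo τ ((Ytilde σ τ)ᶜ) ((Ytilde σ τ)ᶜ) ∧
    (∀ j ∈ (Ytilde σ τ)ᶜ, σ (τ j) = σ j ∧ τ (σ j) = τ j) := by
  -- `Y₀` is mapped into itself by `σ`, in either case of (C).
  have hY : ∀ j, σ j = τ j → σ (σ j) = τ (σ j) := by
    intro j hj
    rcases h j with ⟨_, h2⟩ | ⟨h1, h2⟩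
    · rwa [← hj] at h2
    · rw [h1, ← hj]
      rwa [← hj] at h2
  -- Off `Y₀`, only case (2) of (C) is possible.
  have h2 : ∀ j, σ j ≠ τ j → τ (σ j) = τ j ∧ σ (τ j) = σ j :=
    fun j hj => (h j).resolve_left fun h1 => hj h1.1
  have mem : ∀ j, j ∈ Ytilde σ τ ↔ σ j = τ j ∨ σ (σ j) = τ (σ j) := fun _ => Iff.rfl
  simp only [Set.MapsTo, Set.mem_compl_iff, mem, not_or]
  refine ⟨?_, ?_, ?_, ?_, ?_⟩
  · rintro j (hj | hj)
    · exact Or.inl (hY j hj)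
    · exact Or.inl hj
  · rintro j (hj | hj)
    · exact Or.inl (hj ▸ hY j hj)
    · by_cases hj' : σ j = τ j
      · exact Or.inl (hj' ▸ hj)
      · right
        rwa [(h2 j hj').2]
  · rintro j ⟨hj, hσj⟩
    obtain ⟨a, b⟩ := h2 j hj
    -- Case (2) at `σ j` forces `σ (σ j) = σ (τ (σ j)) = σ (τ j) = σ j`.
    have fix : σ (σ j) = σ j := by rw [← (h2 _ hσj).2, a, b]
    exact ⟨hσj, by rwa [fix]⟩
  · rintro j ⟨hj, hσj⟩
    obtain ⟨a, b⟩ := h2 j hj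
    refine ⟨fun hτj => hσj ?_, by rwa [b]⟩
    -- If `τ j ∈ Y₀` then `σ (τ j) = σ j` lies in `Y₀` as well.
    have := hY _ hτj
    rwa [b] at this
  · rintro j ⟨hj, _⟩
    exact (h2 j hj).symm
end

section
/- (Combinatorial characterization, Theorem on maps with maximal Hilbert series.) Let N be a set, σ, τ : N → N, Y₀ = {j : σ(j) = τ(j)}, Ỹ₀ = Y₀ ∪ {j : σ(j) ∈ Y₀}, and P = N \ Ỹ₀. Then the pair (σ, τ) satisfies condition (C) at every point of N if and only if all of the following hold: (a) σ and τ map Ỹ₀ into Ỹ₀ and P into P; (b) for every j ∈ P, σ(τ(j)) = σ(j) and τ(σ(j)) = τ(j); (c) for every j ∈ Ỹ₀ \ Y₀, the pair j₁ = σ(j), j₂ = τ(j) lies in Y₀ and σ(j₁) = τ(j₁) = j₂ and σ(j₂) = τ(j₂) = j₁; (d) for every j ∈ Y₀, σ(τ(j)) = τ(σ(j)). -/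
theorem map_mem_Yzero {N : Type*} {σ τ : N → N} (h : ∀ j, condC σ τ j) {j : N}
    (hj : j ∈ Yzero σ τ) : σ j ∈ Yzero σ τ := by
  have := h j
  simp only [condC, Yzero, Set.mem_ofPred_eq] at *
  grind

/-- Off `Y₀`, only the second alternative of (C) can hold. -/
theorem eqs_of_notMem_Yzero {N : Type*} {σ τ : N → N} (h : ∀ j, condC σ τ j) {j : N}
    (hj : j ∉ Yzero σ τ) : τ (σ j) = τ j ∧ σ (τ j) = σ j :=
  (h j).resolve_left fun h1 => hj h1.1

/-- combinatorial characterization of maps with maximal Hilbert series: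
with `Y₀ = {j : σ(j) = τ(j)}`, `Ỹ₀ = Y₀ ∪ σ⁻¹(Y₀)` and `P = N \ Ỹ₀`, the pair `(σ, τ)`
satisfies condition (C) at every point of `N` if and only if:
(a) `σ` and `τ` map `Ỹ₀` into `Ỹ₀` and `P` into `P`;
(b) for every `j ∈ P`, `σ(τ(j)) = σ(j)` and `τ(σ(j)) = τ(j)`;
(c) for every `j ∈ Ỹ₀ \ Y₀`, the pair `j₁ = σ(j)`, `j₂ = τ(j)` lies in `Y₀` and
    `σ(j₁) = τ(j₁) = j₂`, `σ(j₂) = τ(j₂) = j₁`;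
(d) for every `j ∈ Y₀`, `σ(τ(j)) = τ(σ(j))`. -/
theorem stmt15 (N : Type*) (σ τ : N → N) :
    (∀ j : N, condC σ τ j) ↔
      ((Set.MapsTo σ (Ytilde σ τ) (Ytilde σ τ) ∧
        Set.MapsTo τ (Ytilde σ τ) (Ytilde σ τ) ∧
        Set.MapsTo σ ((Ytilde σ τ)ᶜ) ((Ytilde σ τ)ᶜ) ∧
        Set.MapsTo τ ((Ytilde σ τ)ᶜ) ((Ytilde σ τ)ᶜ)) ∧
       (∀ j ∈ (Ytilde σ τ)ᶜ, σ (τ j) = σ j ∧ τ (σ j) = τ j) ∧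
       (∀ j ∈ Ytilde σ τ \ Yzero σ τ,
          σ j ∈ Yzero σ τ ∧ τ j ∈ Yzero σ τ ∧
          σ (σ j) = τ j ∧ τ (σ j) = τ j ∧ σ (τ j) = σ j ∧ τ (τ j) = σ j) ∧
       (∀ j ∈ Yzero σ τ, σ (τ j) = τ (σ j))) := by
  have mem_Y : ∀ j, j ∈ Yzero σ τ ↔ σ j = τ j := fun _ => Iff.rfl
  have mem_T : ∀ j, j ∈ Ytilde σ τ ↔ j ∈ Yzero σ τ ∨ σ j ∈ Yzero σ τ := fun _ => Iff.rfl
  constructor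
  · intro h
    have hY : ∀ j, j ∈ Yzero σ τ → σ j ∈ Yzero σ τ := fun _ => map_mem_Yzero h
    have h2 : ∀ j, j ∉ Yzero σ τ → τ (σ j) = τ j ∧ σ (τ j) = σ j :=
      fun _ => eqs_of_notMem_Yzero h
    have hc : ∀ j ∈ Ytilde σ τ \ Yzero σ τ,
        σ j ∈ Yzero σ τ ∧ τ j ∈ Yzero σ τ ∧
        σ (σ j) = τ j ∧ τ (σ j) = τ j ∧ σ (τ j) = σ j ∧ τ (τ j) = σ j := by
      rintro j ⟨hT, hj⟩
      have ha : σ j ∈ Yzero σ τ := ((mem_T j).1 hT).resolve_left hj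
      obtain ⟨h3, h4⟩ := h2 j hj
      have h5 : σ (σ j) = τ j := ((mem_Y _).1 ha).trans h3
      have hb : τ j ∈ Yzero σ τ := h5 ▸ hY _ ha
      exact ⟨ha, hb, h5, h3, h4, ((mem_Y _).1 hb).symm.trans h4⟩
    have hP : ∀ j, j ∉ Ytilde σ τ → σ j ∉ Ytilde σ τ ∧ τ j ∉ Ytilde σ τ := by
      intro j hj
      rw [mem_T, not_or] at hj
      obtain ⟨h3, h4⟩ := h2 j hj.1
      have h5 : σ (σ j) = σ j := by
        have := (h2 _ hj.2).2
        rw [h3, h4] at this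
        exact this.symm
      rw [mem_T, mem_T, h5, h4]
      exact ⟨by tauto, fun hb => hb.elim (fun hb => hj.2 (h4 ▸ hY _ hb)) hj.2⟩
    refine ⟨⟨?_, ?_, fun j hj => (hP j hj).1, fun j hj => (hP j hj).2⟩, ?_, hc, ?_⟩
    · intro j hj
      exact (mem_T _).2 (Or.inl (((mem_T j).1 hj).elim (hY j) id))
    · intro j hj
      refine (mem_T _).2 (Or.inl ?_)
      by_cases hjY : j ∈ Yzero σ τ
      · exact (mem_Y j).1 hjY ▸ hY j hjY
      · exact (hc j ⟨hj, hjY⟩).2.1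
    · intro j hj
      exact (h2 j fun hjY => hj (Or.inl hjY)).symm
    · intro j hj
      have := (mem_Y _).1 (hY j hj)
      rwa [← (mem_Y j).1 hj]
  · rintro ⟨-, hb, hc, hd⟩ j
    by_cases hjY : j ∈ Yzero σ τ
    · exact Or.inl ⟨hjY, hd j hjY⟩
    · by_cases hjT : j ∈ Ytilde σ τ
      · obtain ⟨-, -, -, h3, h4, -⟩ := hc j ⟨hjT, hjY⟩
        exact Or.inr ⟨h3, h4⟩
      · exact Or.inr (hb j hjT).symm
end

section
/- Let K be a field of characteristic 0 and let R = R(f) be the RIT algebra determined by f : {1,…,m} × {1,…,n} → {1,…,n}. Suppose that for every pair of indices i ≠ k the pair of maps (σ_i, σ_k) satisfies condition (C) at every point j ∈ {1,…,n}. Then R has the Hilbert series of a polynomial ring in m + n variables (R is PBW): dim_K R_d = binom(m + n + d − 1, d) for every d ≥ 0, i.e., H_R(t) = 1/(1−t)^{m+n}. -/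
/-!
The relations say that `ad x_i` acts on the commutative polynomial ring `K[y]` as the derivation
`D_i` with `D_i y_j = y_{f(i,j)} y_j`. Condition (C) is exactly what is needed for
`y_{f(i,f(k,j))} y_{f(k,j)} = y_{f(k,f(i,j))} y_{f(i,j)}`, which makes these derivations commute
(`ritDer_comm`).

Consequently `R(f)` acts on the commutative polynomial ring `P = K[x, y]`, with `y_j` acting by
multiplication and `x_i` by `p ↦ x_i p + D_i p` (`exists_ritRep`). In the other direction there is
the linear map `ψ : P → R(f)` sending a monomial `x^a y^b` to the normally ordered product
`y^b x^a`. Acting on `1` recovers the polynomial, so `ψ` is injective; it intertwines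
multiplication by the generators with the action on `P`, so every word of length `d` is `ψ` of a
homogeneous polynomial of degree `d`. Hence `ψ` identifies the homogeneous polynomials of degree
`d` with `R(f)_d`, and counting monomials finishes the proof.
-/

noncomputable section

/-- The generator `x_i` of the free algebra `K⟨x_1,…,x_m,y_1,…,y_n⟩`. -/
def ritX (K : Type) [Field K] (m n : ℕ) (i : Fin m) : FreeAlgebra K (Fin m ⊕ Fin n) :=
  FreeAlgebra.ι K (Sum.inl i)

/-- The generator `y_j` of the free algebra `K⟨x_1,…,x_m,y_1,…,y_n⟩`. -/
def ritY (K : Type) [Field K] (m n : ℕ) (j : Fin n) : FreeAlgebra K (Fin m ⊕ Fin n) :=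
  FreeAlgebra.ι K (Sum.inr j)

/-- The relation whose `RingQuot` is the RIT algebra `R(f)`: the quotient of
`K⟨x_1,…,x_m,y_1,…,y_n⟩` by the two-sided ideal generated by `x_i x_j - x_j x_i`,
`y_i y_j - y_j y_i`, and `x_i y_j - y_j x_i - y_{f(i,j)} y_j`. -/
def ritRel (K : Type) [Field K] (m n : ℕ) (f : Fin m → Fin n → Fin n) :
    FreeAlgebra K (Fin m ⊕ Fin n) → FreeAlgebra K (Fin m ⊕ Fin n) → Prop := fun a b =>
  ((∃ i j : Fin m, a = ritX K m n i * ritX K m n j - ritX K m n j * ritX K m n i) ∨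
   (∃ i j : Fin n, a = ritY K m n i * ritY K m n j - ritY K m n j * ritY K m n i) ∨
   (∃ (i : Fin m) (j : Fin n), a = ritX K m n i * ritY K m n j -
      ritY K m n j * ritX K m n i - ritY K m n (f i j) * ritY K m n j)) ∧ b = 0

/-- The degree-`d` monomial of `K⟨x_1,…,x_m,y_1,…,y_n⟩` determined by a word `w`. -/
def ritMonomial (K : Type) [Field K] (m n : ℕ) {d : ℕ} (w : Fin d → (Fin m ⊕ Fin n)) :
    FreeAlgebra K (Fin m ⊕ Fin n) :=
  ((List.ofFn w).map (FreeAlgebra.ι K)).prod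

/-- `dim_K R(f)_d`: the dimension of the `d`-th homogeneous component of the RIT algebra
`R(f)`, i.e. of the image in `R(f)` of the span of the degree-`d` monomials. -/
def ritDim (K : Type) [Field K] (m n : ℕ) (f : Fin m → Fin n → Fin n) (d : ℕ) : ℕ :=
  Module.finrank K (Submodule.span K
    {y : RingQuot (ritRel K m n f) |
      ∃ w : Fin d → (Fin m ⊕ Fin n),
        y = RingQuot.mkAlgHom K (ritRel K m n f) (ritMonomial K m n w)})

open MvPolynomial

/-! ### Polynomial rings: maps and dimension count -/

open scoped IsMulCommutative in
theorem exists_algHom_of_commute {K A σ : Type*} [Field K] [Ring A] [Algebra K A] (g : σ → A)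
    (hg : ∀ i j, g i * g j = g j * g i) :
    ∃ β : MvPolynomial σ K →ₐ[K] A, ∀ i, β (X i) = g i := by
  have hc : ∀ a ∈ Set.range g, ∀ b ∈ Set.range g, a * b = b * a := by
    rintro _ ⟨i, rfl⟩ _ ⟨j, rfl⟩
    exact hg i j
  have := Algebra.isMulCommutative_adjoin K hc
  refine ⟨(Algebra.adjoin K (Set.range g)).val.comp
    (aeval fun i => (⟨g i, Algebra.subset_adjoin ⟨i, rfl⟩⟩ : Algebra.adjoin K (Set.range g))), ?_⟩
  intro i
  simp

/-- Algebra maps `β` on `K[y]` and `α` on `K[x]` glue to a linear map on `K[x, y]`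
sending `p(y) q(x)` to `β p * α q`, with no commutation between the two images required. -/
theorem exists_glue {K A σ τ : Type*} [Field K] [Ring A] [Algebra K A]
    (α : MvPolynomial σ K →ₐ[K] A) (β : MvPolynomial τ K →ₐ[K] A) :
    ∃ ψ : MvPolynomial (σ ⊕ τ) K →ₗ[K] A, ∀ p q,
      ψ (rename Sum.inr p * rename Sum.inl q) = β p * α q := by
  let ψ : MvPolynomial (σ ⊕ τ) K →ₗ[K] A := (basisMonomials (σ ⊕ τ) K).constr K fun s =>
    β (monomial (Finsupp.sumFinsuppEquivProdFinsupp s).2 1) *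
      α (monomial (Finsupp.sumFinsuppEquivProdFinsupp s).1 1)
  have hψ : ∀ s, ψ (monomial s 1) = β (monomial (Finsupp.sumFinsuppEquivProdFinsupp s).2 1) *
      α (monomial (Finsupp.sumFinsuppEquivProdFinsupp s).1 1) := by
    intro s
    have := (basisMonomials (σ ⊕ τ) K).constr_basis K (fun s =>
      β (monomial (Finsupp.sumFinsuppEquivProdFinsupp s).2 1) *
      α (monomial (Finsupp.sumFinsuppEquivProdFinsupp s).1 1)) s
    simpa only [coe_basisMonomials] using this
  refine ⟨ψ, ?_⟩
  have hC : ∀ s c, ψ (monomial s c) = c • ψ (monomial s 1) := by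
    intro s c
    rw [← map_smul, smul_monomial, smul_eq_mul, mul_one]
  intro p q
  induction p using MvPolynomial.induction_on' with
  | add p p' hp hp' => rw [map_add, add_mul, map_add, hp, hp', map_add, add_mul]
  | monomial b x =>
    induction q using MvPolynomial.induction_on' with
    | add q q' hq hq' => rw [map_add, mul_add, map_add, hq, hq', map_add, mul_add]
    | monomial a y =>
      have hs : b.mapDomain Sum.inr + a.mapDomain Sum.inl =
          Finsupp.sumFinsuppEquivProdFinsupp.symm (a, b) := by
        ext (i | j) <;>
          simp [Finsupp.mapDomain_apply Sum.inl_injective,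
            Finsupp.mapDomain_apply Sum.inr_injective, Finsupp.mapDomain_of_notMem_range]
      have hb : (monomial b x : MvPolynomial τ K) = x • monomial b 1 := by
        rw [smul_monomial, smul_eq_mul, mul_one]
      have ha : (monomial a y : MvPolynomial σ K) = y • monomial a 1 := by
        rw [smul_monomial, smul_eq_mul, mul_one]
      rw [rename_monomial, rename_monomial, monomial_mul, hC, hs, hψ, Equiv.apply_symm_apply,
        hb, ha, map_smul, map_smul, smul_mul_smul_comm]

theorem exists_monomial_split {K σ τ : Type*} [Field K] (s : σ ⊕ τ →₀ ℕ) :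
    ∃ (a : σ →₀ ℕ) (b : τ →₀ ℕ), a.degree + b.degree = s.degree ∧
      (monomial s 1 : MvPolynomial (σ ⊕ τ) K) =
        rename Sum.inr (monomial b 1) * rename Sum.inl (monomial a 1) := by
  have hs : s = (Finsupp.sumFinsuppEquivProdFinsupp s).2.mapDomain Sum.inr +
      (Finsupp.sumFinsuppEquivProdFinsupp s).1.mapDomain Sum.inl := by
    ext (i | j) <;>
      simp [Finsupp.mapDomain_apply Sum.inl_injective, Finsupp.mapDomain_apply Sum.inr_injective,
        Finsupp.mapDomain_of_notMem_range]
  refine ⟨(Finsupp.sumFinsuppEquivProdFinsupp s).1, (Finsupp.sumFinsuppEquivProdFinsupp s).2,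
    ?_, ?_⟩
  · conv_rhs => rw [hs]
    rw [map_add, Finsupp.degree_mapDomain, Finsupp.degree_mapDomain, add_comm]
  · rw [rename_monomial, rename_monomial, monomial_mul, one_mul, ← hs]

theorem finrank_homogeneousSubmodule (K σ : Type*) [Field K] [Fintype σ] [DecidableEq σ] (d : ℕ) :
    Module.finrank K (homogeneousSubmodule σ K d) =
      (Fintype.card σ + d - 1).choose d := by
  have hspan : homogeneousSubmodule σ K d =
      Submodule.span K (Set.range fun s : {s : σ →₀ ℕ // s.sum (fun _ => id) = d} =>
        (monomial s.1 1 : MvPolynomial σ K)) := by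
    rw [homogeneousSubmodule_eq_finsupp_supported, AddMonoidAlgebra.supported_eq_span_single]
    congr 1
    ext p
    simp only [Set.mem_image, Set.mem_range, Subtype.exists, Set.mem_ofPred_eq]
    exact ⟨fun ⟨s, h1, h2⟩ => ⟨s, h1, h2⟩, fun ⟨s, h1, h2⟩ => ⟨s, h1, h2⟩⟩
  have hli : LinearIndependent K (fun s : {s : σ →₀ ℕ // s.sum (fun _ => id) = d} =>
        (monomial s.1 1 : MvPolynomial σ K)) := by
    have := (basisMonomials σ K).linearIndependent.comp
      (fun s : {s : σ →₀ ℕ // s.sum (fun _ => id) = d} => s.1) Subtype.val_injective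
    rw [coe_basisMonomials] at this
    exact this
  let e := Sym.equivNatSum σ d
  have : Fintype {s : σ →₀ ℕ // s.sum (fun _ => id) = d} := Fintype.ofEquiv _ e
  rw [hspan, finrank_span_eq_card hli, ← Fintype.card_congr e, Sym.card_sym_eq_choose]

/-! ### The commuting derivations -/

/-- The derivation of `K[x, y]` with `x_k ↦ 0` and `y_j ↦ y_{f(i,j)} y_j`. -/
def ritDer (K : Type) [Field K] (m n : ℕ) (f : Fin m → Fin n → Fin n) (i : Fin m) :
    Derivation K (MvPolynomial (Fin m ⊕ Fin n) K) (MvPolynomial (Fin m ⊕ Fin n) K) :=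
  mkDerivation K (Sum.elim (fun _ => 0) fun j => X (Sum.inr (f i j)) * X (Sum.inr j))

section

variable {K : Type} [Field K] {m n : ℕ} {f : Fin m → Fin n → Fin n}

@[simp]
theorem ritDer_inl (i k : Fin m) : ritDer K m n f i (X (Sum.inl k)) = 0 := by
  simp [ritDer, mkDerivation_X]

@[simp]
theorem ritDer_inr (i : Fin m) (j : Fin n) :
    ritDer K m n f i (X (Sum.inr j)) = X (Sum.inr (f i j)) * X (Sum.inr j) := by
  simp [ritDer, mkDerivation_X]

theorem ritDer_comm (h : ∀ i k : Fin m, i ≠ k → ∀ j : Fin n, condC (f i) (f k) j) (i k : Fin m)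
    (p : MvPolynomial (Fin m ⊕ Fin n) K) :
    ritDer K m n f i (ritDer K m n f k p) = ritDer K m n f k (ritDer K m n f i p) := by
  have hb : ⁅ritDer K m n f i, ritDer K m n f k⁆ = 0 := by
    refine derivation_ext ?_
    rintro (l | j)
    · simp [Derivation.commutator_apply]
    · simp only [Derivation.commutator_apply, ritDer_inr, Derivation.leibniz, smul_eq_mul,
        Derivation.coe_zero, Pi.zero_apply]
      rcases eq_or_ne i k with rfl | hik
      · ring
      · rcases h i k hik j with ⟨h1, h2⟩ | ⟨h1, h2⟩
        · rw [← h2, h1]; ring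
        · rw [h1, h2]; ring
  have := congrArg (fun D => D p) hb
  simpa [Derivation.commutator_apply, sub_eq_zero] using this

theorem ritDer_rename_inl (i : Fin m) (q : MvPolynomial (Fin m) K) :
    ritDer K m n f i (rename Sum.inl q) = 0 := by
  induction q using MvPolynomial.induction_on with
  | C a => simp
  | add p q hp hq => simp [hp, hq]
  | mul_X p k hp => simp [hp]

theorem ritDer_homogeneous (i : Fin m) {d : ℕ} {p : MvPolynomial (Fin m ⊕ Fin n) K}
    (hp : p.IsHomogeneous d) : (ritDer K m n f i p).IsHomogeneous (d + 1) := by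
  have hX : ∀ q ∈ homogeneousSubmodule (Fin m ⊕ Fin n) K 1,
      (ritDer K m n f i q).IsHomogeneous 2 := by
    intro q hq
    rw [homogeneousSubmodule_one_eq_span_X] at hq
    induction hq using Submodule.span_induction with
    | mem q hq =>
      obtain ⟨k | j, rfl⟩ := hq
      · rw [ritDer_inl]; exact isHomogeneous_zero _ _ _
      · rw [ritDer_inr]; exact (isHomogeneous_X _ _).mul (isHomogeneous_X _ _)
    | zero => rw [map_zero]; exact isHomogeneous_zero _ _ _
    | add q r _ _ hq hr => rw [map_add]; exact hq.add hr
    | smul a q _ hq =>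
      rw [Derivation.map_smul]; exact (homogeneousSubmodule _ K 2).smul_mem a hq
  have hp' : p ∈ homogeneousSubmodule (Fin m ⊕ Fin n) K 1 ^ d := by
    rw [homogeneousSubmodule_one_pow]; exact hp
  clear hp
  induction hp' using Submodule.pow_induction_on_left' with
  | algebraMap r => rw [Derivation.map_algebraMap]; exact isHomogeneous_zero _ _ _
  | add q r k _ _ hq hr => rw [map_add]; exact hq.add hr
  | mem_mul q hq k r hr ih =>
    rw [homogeneousSubmodule_one_pow] at hr
    rw [Derivation.leibniz, smul_eq_mul, smul_eq_mul]
    have h1 := IsHomogeneous.mul hq ih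
    have h2 := IsHomogeneous.mul hr (hX q hq)
    refine IsHomogeneous.add ?_ ?_
    · convert h1 using 1; simp; omega
    · convert h2 using 1

end

/-! ### The algebra and its action on polynomials -/

section

variable {K : Type} [Field K] {m n : ℕ} {f : Fin m → Fin n → Fin n}

/-- The operator on `K[x, y]` through which a generator acts: `x_i` acts as `x_i + D_i`, and
`y_j` acts by multiplication. -/
def ritOp (K : Type) [Field K] (m n : ℕ) (f : Fin m → Fin n → Fin n) :
    Fin m ⊕ Fin n → Module.End K (MvPolynomial (Fin m ⊕ Fin n) K)
  | Sum.inl i => LinearMap.mulLeft K (X (Sum.inl i)) + (ritDer K m n f i).toLinearMap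
  | Sum.inr j => LinearMap.mulLeft K (X (Sum.inr j))

@[simp]
theorem ritOp_inl (i : Fin m) (p : MvPolynomial (Fin m ⊕ Fin n) K) :
    ritOp K m n f (Sum.inl i) p = X (Sum.inl i) * p + ritDer K m n f i p := rfl

@[simp]
theorem ritOp_inr (j : Fin n) (p : MvPolynomial (Fin m ⊕ Fin n) K) :
    ritOp K m n f (Sum.inr j) p = X (Sum.inr j) * p := rfl

theorem ritOp_homogeneous (v : Fin m ⊕ Fin n) {d : ℕ} {p : MvPolynomial (Fin m ⊕ Fin n) K}
    (hp : p.IsHomogeneous d) : (ritOp K m n f v p).IsHomogeneous (d + 1) := by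
  rw [add_comm]
  rcases v with i | j
  · refine ((isHomogeneous_X _ _).mul hp).add ?_
    rw [add_comm]
    exact ritDer_homogeneous i hp
  · exact (isHomogeneous_X _ _).mul hp

/-- The image of a generator in the RIT algebra. -/
def ritGen (K : Type) [Field K] (m n : ℕ) (f : Fin m → Fin n → Fin n) (v : Fin m ⊕ Fin n) :
    RingQuot (ritRel K m n f) :=
  RingQuot.mkAlgHom K (ritRel K m n f) (FreeAlgebra.ι K v)

theorem ritGen_xx (i j : Fin m) :
    ritGen K m n f (Sum.inl i) * ritGen K m n f (Sum.inl j) =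
      ritGen K m n f (Sum.inl j) * ritGen K m n f (Sum.inl i) := by
  have := RingQuot.mkAlgHom_rel K (s := ritRel K m n f) ⟨Or.inl ⟨i, j, rfl⟩, rfl⟩
  simpa only [ritGen, ritX, map_sub, map_mul, map_zero, sub_eq_zero] using this

theorem ritGen_yy (i j : Fin n) :
    ritGen K m n f (Sum.inr i) * ritGen K m n f (Sum.inr j) =
      ritGen K m n f (Sum.inr j) * ritGen K m n f (Sum.inr i) := by
  have := RingQuot.mkAlgHom_rel K (s := ritRel K m n f) ⟨Or.inr (Or.inl ⟨i, j, rfl⟩), rfl⟩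
  simpa only [ritGen, ritY, map_sub, map_mul, map_zero, sub_eq_zero] using this

theorem ritGen_xy (i : Fin m) (j : Fin n) :
    ritGen K m n f (Sum.inl i) * ritGen K m n f (Sum.inr j) =
      ritGen K m n f (Sum.inr j) * ritGen K m n f (Sum.inl i) +
        ritGen K m n f (Sum.inr (f i j)) * ritGen K m n f (Sum.inr j) := by
  have := RingQuot.mkAlgHom_rel K (s := ritRel K m n f) ⟨Or.inr (Or.inr ⟨i, j, rfl⟩), rfl⟩
  simpa only [ritGen, ritX, ritY, map_sub, map_mul, map_zero, map_add, sub_sub, sub_eq_zero]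
    using this

theorem exists_ritRep (h : ∀ i k : Fin m, i ≠ k → ∀ j : Fin n, condC (f i) (f k) j) :
    ∃ ρ : RingQuot (ritRel K m n f) →ₐ[K] Module.End K (MvPolynomial (Fin m ⊕ Fin n) K),
      ∀ v, ρ (ritGen K m n f v) = ritOp K m n f v := by
  refine ⟨RingQuot.liftAlgHom K ⟨FreeAlgebra.lift K (ritOp K m n f), ?_⟩, ?_⟩
  · rintro a b ⟨⟨i, k, rfl⟩ | ⟨i, k, rfl⟩ | ⟨i, k, rfl⟩, rfl⟩ <;>
      refine LinearMap.ext fun p => ?_ <;>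
      simp only [ritX, ritY, map_sub, map_mul, FreeAlgebra.lift_ι_apply, LinearMap.sub_apply,
        Module.End.mul_apply, ritOp_inl, ritOp_inr, map_zero, LinearMap.zero_apply, map_add,
        Derivation.leibniz, smul_eq_mul, ritDer_inl, ritDer_inr]
    · rw [ritDer_comm h i k]; ring
    · ring
    · ring
  · intro v
    simp [ritGen, RingQuot.liftAlgHom_mkAlgHom_apply]

/-- The homogeneous component `R(f)_d` is the `d`-th power of the span of the generators. -/
theorem span_words_eq_pow (d : ℕ) :
    Submodule.span K {y : RingQuot (ritRel K m n f) | ∃ w : Fin d → (Fin m ⊕ Fin n),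
        y = RingQuot.mkAlgHom K (ritRel K m n f) (ritMonomial K m n w)} =
      Submodule.span K (Set.range (ritGen K m n f)) ^ d := by
  rw [Submodule.span_pow]
  congr 1
  have key : ∀ w : Fin d → (Fin m ⊕ Fin n),
      RingQuot.mkAlgHom K (ritRel K m n f) (ritMonomial K m n w) =
        (List.ofFn fun i => ritGen K m n f (w i)).prod := by
    intro w
    rw [ritMonomial, map_list_prod, List.map_map, List.map_ofFn]
    rfl
  ext y
  rw [Set.mem_pow, Set.mem_ofPred_eq]
  constructor
  · rintro ⟨w, rfl⟩
    exact ⟨fun i => ⟨ritGen K m n f (w i), w i, rfl⟩, (key w).symm⟩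
  · rintro ⟨g, rfl⟩
    choose w hw using fun i => (g i).2
    refine ⟨w, ?_⟩
    rw [key]
    simp only [hw]

theorem algHom_monomial_mem_pow {A σ : Type*} [Ring A] [Algebra K A]
    (β : MvPolynomial σ K →ₐ[K] A) (V : Submodule K A) (hV : ∀ i, β (X i) ∈ V) (s : σ →₀ ℕ) :
    β (monomial s 1) ∈ V ^ s.degree := by
  induction s using Finsupp.induction_linear with
  | zero =>
    rw [monomial_zero', C_1, map_one, map_zero, pow_zero]
    exact Submodule.one_le.mp le_rfl
  | add a b ha hb =>
    have : (monomial (a + b) 1 : MvPolynomial σ K) = monomial a 1 * monomial b 1 := by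
      rw [monomial_mul, one_mul]
    rw [this, map_mul, map_add, pow_add]
    exact Submodule.mul_mem_mul ha hb
  | single i k =>
    rw [← X_pow_eq_monomial, map_pow, Finsupp.degree_single]
    exact Submodule.pow_mem_pow _ (hV i) k

end

/-! ### Normal ordering -/

section

variable {K : Type} [Field K] {m n : ℕ} {f : Fin m → Fin n → Fin n}

theorem ritDer_rename_inr (i : Fin m) (p : MvPolynomial (Fin n) K) :
    ritDer K m n f i (rename Sum.inr p) =
      rename Sum.inr (mkDerivation K (fun j => X (f i j) * X j) p) := by
  induction p using MvPolynomial.induction_on with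
  | C a => simp
  | add p q hp hq => simp [hp, hq]
  | mul_X p k hp => simp [hp, mkDerivation_X]

/-- On the subalgebra generated by the `y_j`, the commutator with `x_i` is the derivation with
`y_j ↦ y_{f(i,j)} y_j`. -/
theorem ritGen_mul_algHom (β : MvPolynomial (Fin n) K →ₐ[K] RingQuot (ritRel K m n f))
    (hβ : ∀ j, β (X j) = ritGen K m n f (Sum.inr j)) (i : Fin m) (p : MvPolynomial (Fin n) K) :
    ritGen K m n f (Sum.inl i) * β p = β p * ritGen K m n f (Sum.inl i) +
      β (mkDerivation K (fun j => X (f i j) * X j) p) := by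
  induction p using MvPolynomial.induction_on with
  | C a =>
    rw [derivation_C, map_zero, add_zero, ← algebraMap_eq, AlgHom.commutes]
    exact (Algebra.commutes a _).symm
  | add p q hp hq => simp only [map_add, mul_add, add_mul, hp, hq]; abel
  | mul_X p k hp =>
    rw [Derivation.leibniz, mkDerivation_X, map_mul, ← mul_assoc, hp, add_mul, mul_assoc, hβ,
      ritGen_xy, smul_eq_mul, smul_eq_mul, map_add, mul_comm (X k), map_mul, map_mul, map_mul,
      hβ, hβ, mul_add, mul_assoc, add_assoc]

/-- The normal ordering map `x^a y^b ↦ y^b x^a`, with the properties that identify it as an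
isomorphism of graded spaces: it turns the operators `ritOp` into left multiplication by
generators, maps `1` to `1`, respects degrees, and is injective. -/
theorem exists_normalOrder (h : ∀ i k : Fin m, i ≠ k → ∀ j : Fin n, condC (f i) (f k) j) :
    ∃ ψ : MvPolynomial (Fin m ⊕ Fin n) K →ₗ[K] RingQuot (ritRel K m n f),
      ψ 1 = 1 ∧ (∀ v p, ψ (ritOp K m n f v p) = ritGen K m n f v * ψ p) ∧
      (∀ s : Fin m ⊕ Fin n →₀ ℕ,
        ψ (monomial s 1) ∈ Submodule.span K (Set.range (ritGen K m n f)) ^ s.degree) ∧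
      Function.Injective ψ := by
  obtain ⟨ρ, hρ⟩ := exists_ritRep (K := K) h
  obtain ⟨α, hα⟩ := exists_algHom_of_commute (K := K) (fun i => ritGen K m n f (Sum.inl i))
    ritGen_xx
  obtain ⟨β, hβ⟩ := exists_algHom_of_commute (K := K) (fun i => ritGen K m n f (Sum.inr i))
    ritGen_yy
  obtain ⟨ψ, hψ⟩ := exists_glue α β
  -- Identities between linear maps on `K[x, y]` only need checking on products `p(y) q(x)`.
  have hext : ∀ {M : Type} [AddCommGroup M] [Module K M]
      (S T : MvPolynomial (Fin m ⊕ Fin n) K →ₗ[K] M),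
      (∀ p q, S (rename Sum.inr p * rename Sum.inl q) = T (rename Sum.inr p * rename Sum.inl q)) →
      S = T := by
    intro M _ _ S T hST
    refine (basisMonomials _ K).ext fun s => ?_
    obtain ⟨a, b, -, hs⟩ := exists_monomial_split (K := K) s
    simp only [coe_basisMonomials]
    rw [hs, hST]
  refine ⟨ψ, ?_, ?_, ?_, ?_⟩
  · simpa using hψ 1 1
  · intro v
    have : ψ ∘ₗ ritOp K m n f v = LinearMap.mulLeft K (ritGen K m n f v) ∘ₗ ψ := by
      refine hext _ _ fun p q => ?_
      rw [LinearMap.comp_apply, LinearMap.comp_apply, LinearMap.mulLeft_apply, hψ]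
      rcases v with i | j
      · have e : ritOp K m n f (Sum.inl i) (rename Sum.inr p * rename Sum.inl q) =
            rename Sum.inr p * rename Sum.inl (X i * q) +
              rename Sum.inr (mkDerivation K (fun j => X (f i j) * X j) p) *
                rename Sum.inl q := by
          rw [ritOp_inl, Derivation.leibniz, ritDer_rename_inl, ritDer_rename_inr, map_mul,
            rename_X]
          simp only [smul_eq_mul]
          ring
        rw [e, map_add, hψ, hψ, map_mul, hα, ← mul_assoc, ← mul_assoc,
          ritGen_mul_algHom β hβ, add_mul]
      · have e : ritOp K m n f (Sum.inr j) (rename Sum.inr p * rename Sum.inl q) =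
            rename Sum.inr (X j * p) * rename Sum.inl q := by
          rw [ritOp_inr, map_mul, rename_X, mul_assoc]
        rw [e, hψ, map_mul, hβ, mul_assoc]
    exact fun p => LinearMap.congr_fun this p
  · intro s
    obtain ⟨a, b, hd, hs⟩ := exists_monomial_split (K := K) s
    rw [hs, hψ, ← hd, add_comm, pow_add]
    refine Submodule.mul_mem_mul (algHom_monomial_mem_pow β _ (fun i => ?_) b)
      (algHom_monomial_mem_pow α _ (fun i => ?_) a)
    · rw [hβ]; exact Submodule.subset_span ⟨_, rfl⟩
    · rw [hα]; exact Submodule.subset_span ⟨_, rfl⟩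
  · -- The action on `1` is a left inverse of `ψ`.
    have hy : ∀ p g, ρ (β p) g = rename Sum.inr p * g := by
      have : ρ.comp β = (Algebra.lmul K (MvPolynomial (Fin m ⊕ Fin n) K)).comp
          (rename Sum.inr) := by
        refine algHom_ext fun j => LinearMap.ext fun g => ?_
        simp [hβ, hρ]
      intro p g
      exact congrArg (fun T => T p g) this
    have hx : ∀ q, ρ (α q) 1 = rename Sum.inl q := by
      intro q
      induction q using MvPolynomial.induction_on with
      | C a => simp [← algebraMap_eq, Algebra.smul_def]
      | add p q hp hq => simp [hp, hq]
      | mul_X p k hp =>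
        rw [mul_comm, map_mul, map_mul, Module.End.mul_apply, hp, hα, hρ, ritOp_inl,
          ritDer_rename_inl, add_zero, map_mul, rename_X]
    have hinv : (LinearMap.applyₗ (1 : MvPolynomial (Fin m ⊕ Fin n) K) ∘ₗ ρ.toLinearMap) ∘ₗ ψ =
        LinearMap.id := by
      refine hext _ _ fun p q => ?_
      simp only [LinearMap.comp_apply, hψ, LinearMap.id_apply, LinearMap.applyₗ_apply_apply,
        AlgHom.toLinearMap_apply, map_mul, Module.End.mul_apply, hx, hy]
    exact Function.LeftInverse.injective (g := fun r => ρ r 1) (LinearMap.congr_fun hinv)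

open scoped Pointwise in
theorem pow_eq_map_homogeneous
    (ψ : MvPolynomial (Fin m ⊕ Fin n) K →ₗ[K] RingQuot (ritRel K m n f)) (h1 : ψ 1 = 1)
    (hop : ∀ v p, ψ (ritOp K m n f v p) = ritGen K m n f v * ψ p)
    (hmon : ∀ s : Fin m ⊕ Fin n →₀ ℕ,
      ψ (monomial s 1) ∈ Submodule.span K (Set.range (ritGen K m n f)) ^ s.degree) (d : ℕ) :
    Submodule.span K (Set.range (ritGen K m n f)) ^ d =
      (homogeneousSubmodule (Fin m ⊕ Fin n) K d).map ψ := by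
  apply le_antisymm
  · rw [Submodule.span_pow, Submodule.span_le]
    clear hmon
    induction d with
    | zero =>
      rw [pow_zero, Set.one_subset]
      exact ⟨1, isHomogeneous_one _ _, h1⟩
    | succ d ih =>
      rw [pow_succ']
      rintro _ ⟨_, ⟨v, rfl⟩, z, hz, rfl⟩
      obtain ⟨p, hp, rfl⟩ := ih hz
      exact ⟨ritOp K m n f v p, ritOp_homogeneous v hp, hop v p⟩
  · rw [homogeneousSubmodule_eq_finsupp_supported, AddMonoidAlgebra.supported_eq_span_single,
      Submodule.map_span, Submodule.span_le]
    rintro _ ⟨_, ⟨s, hs, rfl⟩, rfl⟩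
    have := hmon s
    rw [show s.degree = d from hs] at this
    exact this

end

/-- if for every pair of indices `i ≠ k` the pair of defining maps
`(σ_i, σ_k)`, `σ_i(j) = f(i,j)`, satisfies condition (C) at every point, then the RIT
algebra `R(f)` over a field of characteristic `0` has the Hilbert series of a polynomial
ring in `m + n` variables (it is PBW): `dim_K R_d = C(m + n + d - 1, d)` for all `d`. -/
theorem stmt16 (K : Type) [Field K] [CharZero K] (m n : ℕ) (hm : 1 ≤ m) (hn : 1 ≤ n)
    (f : Fin m → Fin n → Fin n)
    (h : ∀ i k : Fin m, i ≠ k → ∀ j : Fin n, condC (f i) (f k) j) :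
    ∀ d : ℕ, ritDim K m n f d = Nat.choose (m + n + d - 1) d := by
  intro d
  obtain ⟨ψ, h1, hop, hmon, hinj⟩ := exists_normalOrder (K := K) h
  have hmap := pow_eq_map_homogeneous (f := f) ψ h1 hop hmon d
  rw [ritDim, span_words_eq_pow, hmap,
    ← (Submodule.equivMapOfInjective ψ hinj _).finrank_eq, finrank_homogeneousSubmodule]
  simp
end
end

section
/- Let K be a field of characteristic 0 and let R₂ be the RIT algebra of rank 4 determined by the maps σ₁ = (1,2) (the identity) and σ₂ = (2,1) (the transposition), i.e., the quotient of K⟨x₁, x₂, y₁, y₂⟩ by the two-sided ideal generated by x₁x₂ − x₂x₁, y₁y₂ − y₂y₁, x₁y₁ − y₁x₁ − y₁², x₁y₂ − y₂x₁ − y₂², x₂y₁ − y₁x₂ − y₂y₁, x₂y₂ − y₂x₂ − y₁y₂. Then the Hilbert series of R₂ is (1 + t + t²)/(1 − 3t + 3t² − t³); equivalently, dim_K (R₂)_d = (3d² + 3d + 2)/2 for every d ≥ 0. In particular R₂ is not PBW: its Hilbert series differs from 1/(1−t)⁴. -/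
/-!
Write `a = y₁`, `b = y₂`. Bracketing with `x₁` and `x₂` acts on `K[a, b]` by the derivations
`D₁ a = a²`, `D₁ b = b²` and `D₂ a = D₂ b = ab`. Since `x₁` and `x₂` commute, so must `D₁` and `D₂`,
and `[D₁, D₂] a = -ab(a - b)` forces `a²b = ab²` in `R₂` (`rit_key`). Hence `R₂` is the iterated
Ore extension by `x₁`, `x₂` of the coordinate ring `B = K[a, b]/(ab(a - b))` of three concurrent
lines, and a basis of its degree-`d` part consists of the monomials `a^p b^q x₁^i x₂^j` of degree
`d` with `q ≤ 1` or `p = 0`.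

Spanning (`ritV_ofMonomial`, `span_words_eq`): `a^p b^q = a^(p+q-1) b` for `p, q ≥ 1`, and left
multiplication by each generator preserves the span of ordered monomials.

Independence (`linInd`): each of the lines `b = 0`, `a = 0`, `a = b`, parametrised by
`(a, b) = (αt, βt)` with `α² = α` and `β² = β`, gives a representation of `R₂` on `K[t, X₁, X₂]`
(`lineRep`), and the ordered monomial above sends `1` to `α^p β^q t^(p+q) X₁^i X₂^j`. Coefficients
along the three lines combine to a family of functionals dual to the basis.

Counting: the cases `q = 0`, `q = 1`, and `p = 0, q ≥ 2` contribute
`C(d+2, 2) + C(d+1, 2) + C(d, 2) = (3d² + 3d + 2)/2` monomials.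
-/

noncomputable section

/-- The defining map of the rank-4 RIT algebra `R₂`: `σ₁ = (1,2)` is the identity and
`σ₂ = (2,1)` is the transposition of `{1,2}`, i.e. `f(1,1)=1, f(1,2)=2, f(2,1)=2,
f(2,2)=1`. -/
def fR2 : Fin 2 → Fin 2 → Fin 2 := fun i j => if i = 0 then j else j + 1

/-! ### Commutation rules -/

section Commutation

variable {A : Type*} [Ring A] {a b x z : A}

/-- Comparing `x(za)` with `z(xa)` after moving `x` and `z` to the right leaves `b²a = aba`. -/
lemma rit_key (hxz : x * z = z * x) (hab : a * b = b * a) (hxa : x * a = a * x + a * a)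
    (hxb : x * b = b * x + b * b) (hza : z * a = a * z + b * a) :
    a * a * b = a * b * b := by
  have h1 : x * (z * a) = a * (x * z) + a * a * z + b * a * x + b * (a * a) + b * b * a := by
    rw [hza, mul_add, ← mul_assoc, hxa, ← mul_assoc x b a, hxb]
    simp only [add_mul, mul_assoc, hxa, mul_add]
    abel
  have h2 : z * (x * a) = a * (z * x) + a * a * z + b * a * x + a * b * a + b * (a * a) := by
    rw [hxa, mul_add, ← mul_assoc, hza, ← mul_assoc z a a, hza]
    simp only [add_mul, mul_assoc, hza, mul_add]
    abel
  have h3 : x * (z * a) = z * (x * a) := by rw [← mul_assoc, hxz, mul_assoc]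
  rw [h1, h2, hxz] at h3
  have h4 : b * b * a = a * b * a := by
    have : b * b * a + (a * (z * x) + a * a * z + b * a * x + b * (a * a)) =
        a * b * a + (a * (z * x) + a * a * z + b * a * x + b * (a * a)) := by
      rw [add_comm, h3]; abel
    exact add_right_cancel this
  calc a * a * b = a * b * a := by rw [mul_assoc, hab, ← mul_assoc]; rw [hab]
    _ = b * b * a := h4.symm
    _ = a * b * b := by rw [mul_assoc, ← hab, ← mul_assoc, hab]

lemma rit_comm_pow {c : A} (hac : Commute a c) (h : x * a = a * x + c * a) (p : ℕ) :
    x * a ^ p = a ^ p * x + p • (c * a ^ p) := by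
  induction p with
  | zero => simp
  | succ p ih =>
    have hc : a ^ p * c = c * a ^ p := (hac.pow_left p)
    rw [pow_succ, ← mul_assoc, ih, add_mul, mul_assoc, h, mul_add, ← mul_assoc, ← mul_assoc, hc,
      smul_mul_assoc, succ_nsmul]
    simp only [mul_assoc]
    abel

lemma rit_comm_pow_pow {c e : A} (hac : Commute a c) (hae : Commute a e)
    (hbe : Commute b e)
    (ha : x * a = a * x + c * a) (hb : x * b = b * x + e * b) (p q : ℕ) :
    x * (a ^ p * b ^ q) = a ^ p * b ^ q * x + p • (c * (a ^ p * b ^ q)) +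
      q • (e * (a ^ p * b ^ q)) := by
  have hc : a ^ p * e = e * a ^ p := (hae.pow_left p)
  rw [← mul_assoc, rit_comm_pow hac ha, add_mul, mul_assoc, rit_comm_pow hbe hb, mul_add,
    mul_smul_comm, ← mul_assoc (a ^ p) e, hc]
  simp only [mul_assoc, smul_mul_assoc]
  abel

lemma rit_pow_reduce (h : a * a * b = a * b * b) (p q : ℕ) :
    a ^ (p + 1) * b ^ (q + 1) = a ^ (p + q + 1) * b := by
  induction q generalizing p with
  | zero => simp
  | succ q ih =>
    calc a ^ (p + 1) * b ^ (q + 1 + 1) = a ^ p * (a * b * b) * b ^ q := by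
          rw [pow_succ a, pow_succ' b, pow_succ' b]; simp only [mul_assoc]
      _ = a ^ (p + 1 + 1) * b ^ (q + 1) := by
          rw [← h, pow_succ a, pow_succ a, pow_succ' b]; simp only [mul_assoc]
      _ = a ^ (p + (q + 1) + 1) * b := by rw [ih]; congr 2; ring

end Commutation

/-! ### The spanning set -/

section Spanning

variable (K : Type) [Field K]

/-- The RIT algebra `R₂`. -/
abbrev R2 : Type := RingQuot (ritRel K 2 2 fR2)

/-- The image in `R₂` of a generator of the free algebra. -/
def gen (s : Fin 2 ⊕ Fin 2) : R2 K :=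
  RingQuot.mkAlgHom K (ritRel K 2 2 fR2) (FreeAlgebra.ι K s)

lemma gen_xx (i j : Fin 2) : gen K (.inl i) * gen K (.inl j) = gen K (.inl j) * gen K (.inl i) := by
  have h := RingQuot.mkAlgHom_rel K (s := ritRel K 2 2 fR2) ⟨.inl ⟨i, j, rfl⟩, rfl⟩
  simp only [map_sub, map_mul, map_zero] at h
  exact sub_eq_zero.mp h

lemma gen_yy (i j : Fin 2) : gen K (.inr i) * gen K (.inr j) = gen K (.inr j) * gen K (.inr i) := by
  have h := RingQuot.mkAlgHom_rel K (s := ritRel K 2 2 fR2) ⟨.inr (.inl ⟨i, j, rfl⟩), rfl⟩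
  simp only [map_sub, map_mul, map_zero] at h
  exact sub_eq_zero.mp h

lemma gen_xy (i j : Fin 2) : gen K (.inl i) * gen K (.inr j) =
    gen K (.inr j) * gen K (.inl i) + gen K (.inr (fR2 i j)) * gen K (.inr j) := by
  have h := RingQuot.mkAlgHom_rel K (s := ritRel K 2 2 fR2) ⟨.inr (.inr ⟨i, j, rfl⟩), rfl⟩
  simp only [map_sub, map_mul, map_zero] at h
  rw [sub_sub] at h
  exact sub_eq_zero.mp h

/-- The ordered monomial `y₁^p y₂^q x₁^i x₂^j` of `R₂`, for `t = (p, q, i, j)`. -/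
def ordMon (t : ℕ × ℕ × ℕ × ℕ) : R2 K :=
  gen K (.inr 0) ^ t.1 * gen K (.inr 1) ^ t.2.1 *
    (gen K (.inl 0) ^ t.2.2.1 * gen K (.inl 1) ^ t.2.2.2)

/-- Exponents `(p, q, i, j)` of the basis monomials of degree `d`: those with `q ≤ 1` or `p = 0`. -/
def basisIdx (d : ℕ) : Finset (ℕ × ℕ × ℕ × ℕ) :=
  (Finset.range (d + 1) ×ˢ Finset.range (d + 1) ×ˢ Finset.range (d + 1) ×ˢ
    Finset.range (d + 1)).filter
      fun t => t.1 + t.2.1 + t.2.2.1 + t.2.2.2 = d ∧ (t.2.1 ≤ 1 ∨ t.1 = 0)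

lemma mem_basisIdx {d p q i j : ℕ} :
    (p, q, i, j) ∈ basisIdx d ↔ p + q + i + j = d ∧ (q ≤ 1 ∨ p = 0) := by
  simp only [basisIdx, Finset.mem_filter, Finset.mem_product, Finset.mem_range]
  omega

/-- The span of the basis monomials of degree `d`. -/
def ritV (d : ℕ) : Submodule K (R2 K) :=
  Submodule.span K (Set.range fun t : basisIdx d => ordMon K t)

/-- Every ordered monomial reduces to a basis monomial. -/
lemma ritV_ofMonomial {d p q i j : ℕ} (h : p + q + i + j = d) :
    ordMon K (p, q, i, j) ∈ ritV K d := by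
  by_cases hq : q ≤ 1 ∨ p = 0
  · exact Submodule.subset_span ⟨⟨_, mem_basisIdx.mpr ⟨h, hq⟩⟩, rfl⟩
  · obtain ⟨p, rfl⟩ : ∃ r, p = r + 1 := ⟨p - 1, by omega⟩
    obtain ⟨q, rfl⟩ : ∃ r, q = r + 1 := ⟨q - 1, by omega⟩
    have hk := rit_key (gen_xx K 0 1) (gen_yy K 0 1) (gen_xy K 0 0) (gen_xy K 0 1)
      (gen_xy K 1 0)
    have : ordMon K (p + 1, q + 1, i, j) = ordMon K (p + q + 1, 1, i, j) := by
      simp only [ordMon, rit_pow_reduce hk, pow_one]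
    rw [this]
    exact Submodule.subset_span ⟨⟨_, mem_basisIdx.mpr ⟨by omega, .inl le_rfl⟩⟩, rfl⟩

lemma y0_mul_ordMon (p q i j : ℕ) :
    gen K (.inr 0) * ordMon K (p, q, i, j) = ordMon K (p + 1, q, i, j) := by
  simp only [ordMon, pow_succ' _ p, mul_assoc]

lemma y1_mul_ordMon (p q i j : ℕ) :
    gen K (.inr 1) * ordMon K (p, q, i, j) = ordMon K (p, q + 1, i, j) := by
  have h : gen K (.inr 1) * gen K (.inr 0) ^ p = gen K (.inr 0) ^ p * gen K (.inr 1) :=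
    Commute.pow_right (gen_yy K 1 0) p
  simp only [ordMon, pow_succ' _ q]
  rw [← mul_assoc, ← mul_assoc (gen K (.inr 1)), h]
  simp only [mul_assoc]

lemma x0_mul_ordMon (p q i j : ℕ) :
    gen K (.inl 0) * ordMon K (p, q, i, j) = ordMon K (p, q, i + 1, j) +
      p • ordMon K (p + 1, q, i, j) + q • ordMon K (p, q + 1, i, j) := by
  rw [← y0_mul_ordMon, ← y1_mul_ordMon]
  simp only [ordMon]
  rw [← mul_assoc, rit_comm_pow_pow (Commute.refl _) (gen_yy K 0 1)
    (Commute.refl _) (gen_xy K 0 0) (gen_xy K 0 1), pow_succ' _ i]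
  simp only [add_mul, mul_assoc, smul_mul_assoc]

lemma x1_mul_ordMon (p q i j : ℕ) :
    gen K (.inl 1) * ordMon K (p, q, i, j) = ordMon K (p, q, i, j + 1) +
      p • ordMon K (p, q + 1, i, j) + q • ordMon K (p + 1, q, i, j) := by
  have h : gen K (.inl 1) * gen K (.inl 0) ^ i = gen K (.inl 0) ^ i * gen K (.inl 1) :=
    Commute.pow_right (gen_xx K 1 0) i
  rw [← y0_mul_ordMon, ← y1_mul_ordMon]
  simp only [ordMon]
  rw [← mul_assoc, rit_comm_pow_pow (gen_yy K 0 1) (Commute.refl _)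
    (gen_yy K 1 0) (gen_xy K 1 0) (gen_xy K 1 1), pow_succ' _ j]
  simp only [add_mul, smul_mul_assoc]
  rw [mul_assoc _ (gen K (.inl 1)), ← mul_assoc (gen K (.inl 1)), h]
  simp only [mul_assoc]

lemma gen_mul_mem {d : ℕ} (s : Fin 2 ⊕ Fin 2) {r : R2 K} (hr : r ∈ ritV K d) :
    gen K s * r ∈ ritV K (d + 1) := by
  induction hr using Submodule.span_induction with
  | zero => simp
  | add u v _ _ hu hv => rw [mul_add]; exact add_mem hu hv
  | smul c u _ hu => rw [mul_smul_comm]; exact Submodule.smul_mem _ c hu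
  | mem u hu =>
    obtain ⟨⟨⟨p, q, i, j⟩, ht⟩, rfl⟩ := hu
    have hd := (mem_basisIdx.mp ht).1
    have mem {p q i j : ℕ} (h : p + q + i + j = d + 1) := ritV_ofMonomial K h
    rcases s with s | s <;> fin_cases s
    · simp only [Fin.zero_eta, x0_mul_ordMon]
      exact add_mem (add_mem (mem (by omega)) (nsmul_mem (mem (by omega)) _))
        (nsmul_mem (mem (by omega)) _)
    · simp only [Fin.mk_one, x1_mul_ordMon]
      exact add_mem (add_mem (mem (by omega)) (nsmul_mem (mem (by omega)) _))
        (nsmul_mem (mem (by omega)) _)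
    · simp only [Fin.zero_eta, y0_mul_ordMon]
      exact mem (by omega)
    · simp only [Fin.mk_one, y1_mul_ordMon]
      exact mem (by omega)

lemma mk_monomial {d : ℕ} (w : Fin d → Fin 2 ⊕ Fin 2) :
    RingQuot.mkAlgHom K (ritRel K 2 2 fR2) (ritMonomial K 2 2 w) =
      ((List.ofFn w).map (gen K)).prod := by
  rw [ritMonomial, map_list_prod, List.map_map]
  rfl

lemma word_mem {d : ℕ} (w : Fin d → Fin 2 ⊕ Fin 2) :
    ((List.ofFn w).map (gen K)).prod ∈ ritV K d := by
  induction d with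
  | zero =>
    have := ritV_ofMonomial K (d := 0) (p := 0) (q := 0) (i := 0) (j := 0) rfl
    simpa [ordMon] using this
  | succ d ih =>
    rw [List.ofFn_succ, List.map_cons, List.prod_cons]
    exact gen_mul_mem K _ (ih _)

lemma span_words_eq (d : ℕ) :
    Submodule.span K {y : R2 K | ∃ w : Fin d → (Fin 2 ⊕ Fin 2),
        y = RingQuot.mkAlgHom K (ritRel K 2 2 fR2) (ritMonomial K 2 2 w)} = ritV K d := by
  apply le_antisymm
  · rw [Submodule.span_le]
    rintro _ ⟨w, rfl⟩
    rw [mk_monomial]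
    exact word_mem K w
  · refine Submodule.span_mono ?_
    rintro _ ⟨⟨⟨p, q, i, j⟩, ht⟩, rfl⟩
    have hd := (mem_basisIdx.mp ht).1
    -- an ordered monomial is the image of the corresponding ordered word
    let l : List (Fin 2 ⊕ Fin 2) := List.replicate p (.inr 0) ++ List.replicate q (.inr 1) ++
      (List.replicate i (.inl 0) ++ List.replicate j (.inl 1))
    have hl : l.length = d := by simp [l]; omega
    subst hl
    refine ⟨l.get, ?_⟩
    rw [mk_monomial, List.ofFn_get]
    simp [l, ordMon, mul_assoc]

end Spanning

/-! ### Representations on the three lines -/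

section Representation

open MvPolynomial

variable (K : Type) [Field K]

/-- The derivation `t² ∂/∂t` of `K[t, X₁, X₂]`, where `t` is the variable of index `0`. -/
def lineDer : MvPolynomial (Fin 3) K →ₗ[K] MvPolynomial (Fin 3) K :=
  LinearMap.mulLeft K (X 0 ^ 2) ∘ₗ (pderiv 0).toLinearMap

lemma lineDer_apply (g : MvPolynomial (Fin 3) K) : lineDer K g = X 0 ^ 2 * pderiv 0 g := rfl

/-- The operators on `K[t, X₁, X₂]` by which the generators act along the line
`(y₁, y₂) = (αt, βt)`: `x₁ = X₁ + t²∂ₜ` and `x₂ = X₂ + αβ t²∂ₜ`. -/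
def lineOp (α β : K) : Fin 2 ⊕ Fin 2 → Module.End K (MvPolynomial (Fin 3) K)
  | .inl i => if i = 0 then LinearMap.mulLeft K (X 1) + lineDer K
      else LinearMap.mulLeft K (X 2) + (α * β) • lineDer K
  | .inr j => LinearMap.mulLeft K (C (if j = 0 then α else β) * X 0)

variable {K}

lemma lineOp_x0 (α β : K) (g : MvPolynomial (Fin 3) K) :
    lineOp K α β (.inl 0) g = X 1 * g + X 0 ^ 2 * pderiv 0 g := by
  simp [lineOp, lineDer_apply]

lemma lineOp_x1 (α β : K) (g : MvPolynomial (Fin 3) K) :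
    lineOp K α β (.inl 1) g = X 2 * g + C (α * β) * (X 0 ^ 2 * pderiv 0 g) := by
  simp [lineOp, lineDer_apply, MvPolynomial.smul_eq_C_mul]

lemma lineOp_y0 (α β : K) (g : MvPolynomial (Fin 3) K) :
    lineOp K α β (.inr 0) g = C α * X 0 * g := by
  simp [lineOp, mul_assoc]

lemma lineOp_y1 (α β : K) (g : MvPolynomial (Fin 3) K) :
    lineOp K α β (.inr 1) g = C β * X 0 * g := by
  simp [lineOp, mul_assoc]

lemma lineOp_rel {α β : K} (hα : α * α = α) (hβ : β * β = β)
    ⦃u v : FreeAlgebra K (Fin 2 ⊕ Fin 2)⦄ (h : ritRel K 2 2 fR2 u v) :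
    FreeAlgebra.lift K (lineOp K α β) u = FreeAlgebra.lift K (lineOp K α β) v := by
  have d10 : pderiv (R := K) (0 : Fin 3) (X 1) = 0 := pderiv_X_of_ne (by decide)
  have d20 : pderiv (R := K) (0 : Fin 3) (X 2) = 0 := pderiv_X_of_ne (by decide)
  have d00 : pderiv (R := K) (0 : Fin 3) (X 0) = 1 := pderiv_X_self 0
  have cα : (C α * C α : MvPolynomial (Fin 3) K) = C α := by rw [← C_mul, hα]
  have cβ : (C β * C β : MvPolynomial (Fin 3) K) = C β := by rw [← C_mul, hβ]
  have f00 : fR2 0 0 = 0 := rfl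
  have f01 : fR2 0 1 = 1 := rfl
  have f10 : fR2 1 0 = 1 := rfl
  have f11 : fR2 1 1 = 0 := rfl
  obtain ⟨⟨i, j, rfl⟩ | ⟨i, j, rfl⟩ | ⟨i, j, rfl⟩, rfl⟩ := h <;>
  refine LinearMap.ext fun g => ?_ <;>
  fin_cases i <;> fin_cases j <;>
  simp only [Fin.zero_eta, Fin.mk_one, ritX, ritY, map_sub, map_mul, map_zero,
    FreeAlgebra.lift_ι_apply, LinearMap.sub_apply, Module.End.mul_apply, LinearMap.zero_apply,
    lineOp_x0, lineOp_x1, lineOp_y0, lineOp_y1, f00, f01, f10, f11, map_add, Derivation.leibniz,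
    Derivation.leibniz_pow, d10, d20, d00, pderiv_C, smul_eq_mul, nsmul_eq_mul] <;>
  first
  | ring1
  | linear_combination (-X 0 ^ 2 * g) * cα
  | linear_combination (-X 0 ^ 2 * g) * cβ
  | linear_combination (X 0 ^ 2 * g * C β) * cα
  | linear_combination (X 0 ^ 2 * g * C α) * cβ

/-- The representation of `R₂` on `K[t, X₁, X₂]` attached to the line `(y₁, y₂) = (αt, βt)`. -/
def lineRep {α β : K} (hα : α * α = α) (hβ : β * β = β) :
    R2 K →ₐ[K] Module.End K (MvPolynomial (Fin 3) K) :=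
  RingQuot.liftAlgHom K ⟨FreeAlgebra.lift K (lineOp K α β), lineOp_rel hα hβ⟩

lemma lineRep_gen {α β : K} (hα : α * α = α) (hβ : β * β = β) (s : Fin 2 ⊕ Fin 2) :
    lineRep hα hβ (gen K s) = lineOp K α β s := by
  rw [lineRep, gen, RingQuot.liftAlgHom_mkAlgHom_apply, FreeAlgebra.lift_ι_apply]

/-- The exponent of `t^k X₁^i X₂^j`. -/
def expo (k i j : ℕ) : Fin 3 →₀ ℕ := Finsupp.equivFunOnFinite.symm ![k, i, j]

lemma expo_inj {k i j k' i' j' : ℕ} :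
    expo k i j = expo k' i' j' ↔ k = k' ∧ i = i' ∧ j = j' := by
  simp [expo]

lemma prod_eq_monomial (k i j : ℕ) (c : K) :
    (C c * (X 0 ^ k * (X 1 ^ i * X 2 ^ j)) : MvPolynomial (Fin 3) K) = monomial (expo k i j) c := by
  rw [monomial_eq, Finsupp.prod_fintype _ _ (by simp)]
  simp [Fin.prod_univ_three, expo, mul_assoc]

lemma lineRep_ordMon {α β : K} (hα : α * α = α) (hβ : β * β = β) (p q i j : ℕ) :
    lineRep hα hβ (ordMon K (p, q, i, j)) 1 = monomial (expo (p + q) i j) (α ^ p * β ^ q) := by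
  have d10 : pderiv (R := K) (0 : Fin 3) (X 1) = 0 := pderiv_X_of_ne (by decide)
  have d20 : pderiv (R := K) (0 : Fin 3) (X 2) = 0 := pderiv_X_of_ne (by decide)
  have h1 : (lineOp K α β (.inl 1) ^ j) 1 = X 2 ^ j := by
    induction j with
    | zero => simp
    | succ j ih =>
      rw [pow_succ', Module.End.mul_apply, ih, lineOp_x1]
      simp [Derivation.leibniz_pow, d20, pow_succ']
  have h2 : (lineOp K α β (.inl 0) ^ i) (X 2 ^ j) = X 1 ^ i * X 2 ^ j := by
    induction i with
    | zero => simp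
    | succ i ih =>
      rw [pow_succ', Module.End.mul_apply, ih, lineOp_x0]
      simp [Derivation.leibniz, Derivation.leibniz_pow, d10, d20, pow_succ', mul_assoc]
  have h3 (g : MvPolynomial (Fin 3) K) :
      (lineOp K α β (.inr 1) ^ q) g = (C β * X 0) ^ q * g := by
    induction q with
    | zero => simp
    | succ q ih => rw [pow_succ', Module.End.mul_apply, ih, lineOp_y1]; ring
  have h4 (g : MvPolynomial (Fin 3) K) :
      (lineOp K α β (.inr 0) ^ p) g = (C α * X 0) ^ p * g := by
    induction p with
    | zero => simp
    | succ p ih => rw [pow_succ', Module.End.mul_apply, ih, lineOp_y0]; ring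
  simp only [ordMon, map_mul, map_pow, lineRep_gen, Module.End.mul_apply, h1, h2, h3, h4]
  rw [← prod_eq_monomial, C_mul, C_pow, C_pow]
  ring

/-- The functional on `R₂` sending `r` to the coefficient of `t^k X₁^i X₂^j` in `r · 1`, for the
representation attached to the line `(αt, βt)`. -/
def lineCoeff {α β : K} (hα : α * α = α) (hβ : β * β = β) (k i j : ℕ) : Module.Dual K (R2 K) :=
  (lcoeff K (expo k i j)) ∘ₗ (LinearMap.applyₗ (1 : MvPolynomial (Fin 3) K)) ∘ₗ
    (lineRep hα hβ).toLinearMap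

lemma lineCoeff_ordMon {α β : K} (hα : α * α = α) (hβ : β * β = β) (k i j p q i' j' : ℕ) :
    lineCoeff hα hβ k i j (ordMon K (p, q, i', j')) =
      if p + q = k ∧ i' = i ∧ j' = j then α ^ p * β ^ q else 0 := by
  have : lineCoeff hα hβ k i j (ordMon K (p, q, i', j')) =
      coeff (expo k i j) (lineRep hα hβ (ordMon K (p, q, i', j')) 1) := rfl
  rw [this, lineRep_ordMon, coeff_monomial]
  simp only [expo_inj]

variable (K)

/-- Functionals dual to the basis monomials. A monomial `y₁^p y₂^q ⋯` restricts to zero on `y₂ = 0`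
unless `q = 0`, and on `y₁ = 0` unless `p = 0`; the monomials with `p ≥ 1`, `q = 1` are detected on
`y₁ = y₂` after removing the contributions of the pure powers. -/
def dualFun (t : ℕ × ℕ × ℕ × ℕ) : Module.Dual K (R2 K) :=
  let L₁ := lineCoeff (K := K) (mul_one 1) (mul_zero 0) (t.1 + t.2.1) t.2.2.1 t.2.2.2
  let L₂ := lineCoeff (K := K) (mul_zero 0) (mul_one 1) (t.1 + t.2.1) t.2.2.1 t.2.2.2
  let L₃ := lineCoeff (K := K) (mul_one 1) (mul_one 1) (t.1 + t.2.1) t.2.2.1 t.2.2.2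
  if t.2.1 = 0 then L₁ else if t.1 = 0 then L₂ else L₃ - L₁ - L₂

lemma dualFun_ordMon {d : ℕ} {s t : ℕ × ℕ × ℕ × ℕ} (hs : s ∈ basisIdx d) (ht : t ∈ basisIdx d) :
    dualFun K s (ordMon K t) = if s = t then 1 else 0 := by
  obtain ⟨p, q, i, j⟩ := s
  obtain ⟨p', q', i', j'⟩ := t
  obtain ⟨-, hs⟩ := mem_basisIdx.mp hs
  obtain ⟨-, ht⟩ := mem_basisIdx.mp ht
  simp only [dualFun, Prod.mk.injEq]
  by_cases hij : i' = i ∧ j' = j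
  swap
  · have h1 : ¬ (p = p' ∧ q = q' ∧ i = i' ∧ j = j') := fun h => hij ⟨h.2.2.1.symm, h.2.2.2.symm⟩
    split_ifs <;> simp [lineCoeff_ordMon, hij]
  obtain ⟨rfl, rfl⟩ := hij
  split_ifs <;>
    simp only [lineCoeff_ordMon, LinearMap.sub_apply, zero_pow_eq, one_pow, mul_one, one_mul,
      and_true] <;>
    split_ifs <;> first | omega | simp

lemma linInd (d : ℕ) : LinearIndependent K fun t : basisIdx d => ordMon K (t : ℕ × ℕ × ℕ × ℕ) := by
  refine LinearIndependent.of_pairwise_dual_eq_zero_one _ (fun t => dualFun K t) ?_ ?_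
  · intro s t hst
    rw [dualFun_ordMon K s.2 t.2, if_neg fun h => hst (Subtype.ext h)]
  · intro t
    rw [dualFun_ordMon K t.2 t.2, if_pos rfl]

end Representation

/-! ### Counting -/

/-- Triples of natural numbers with sum `n`, encoded as `((p, s), (i, j))` with `p + s = n` and
`i + j = s`. -/
def triples (n : ℕ) : Finset (Σ _ : ℕ × ℕ, ℕ × ℕ) :=
  (Finset.HasAntidiagonal.antidiagonal n).sigma fun u => Finset.HasAntidiagonal.antidiagonal u.2

lemma card_triples (n : ℕ) : 2 * (triples n).card = (n + 1) * (n + 2) := by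
  simp only [triples, Finset.card_sigma, Finset.Nat.card_antidiagonal]
  induction n with
  | zero => simp
  | succ n ih =>
    rw [Finset.Nat.sum_antidiagonal_succ, mul_add, ih]
    ring

lemma mem_triples {n p s i j : ℕ} :
    (⟨(p, s), (i, j)⟩ : Σ _ : ℕ × ℕ, ℕ × ℕ) ∈ triples n ↔ p + s = n ∧ i + j = s := by
  simp [triples]

/-- The three families `q = 0`, `q = 1`, and `p = 0, q ≥ 2` are counted by triples of sum
`d`, `d - 1` and `d - 2`. -/
lemma basisIdx_add_two (n : ℕ) : basisIdx (n + 2) =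
    (triples (n + 2)).image (fun u => (u.1.1, 0, u.2.1, u.2.2)) ∪
    ((triples (n + 1)).image (fun u => (u.1.1, 1, u.2.1, u.2.2)) ∪
    (triples n).image (fun u => (0, u.1.1 + 2, u.2.1, u.2.2))) := by
  ext ⟨p, q, i, j⟩
  simp only [mem_basisIdx, Finset.mem_union, Finset.mem_image, Prod.mk.injEq]
  constructor
  · rintro ⟨h, h'⟩
    rcases q with _ | _ | q
    · exact .inl ⟨⟨(p, i + j), (i, j)⟩, mem_triples.mpr (by omega), by simp⟩
    · exact .inr (.inl ⟨⟨(p, i + j), (i, j)⟩, mem_triples.mpr (by omega), by simp⟩)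
    · exact .inr (.inr ⟨⟨(q, i + j), (i, j)⟩, mem_triples.mpr (by omega), by simp; omega⟩)
  · rintro (⟨⟨⟨a, s⟩, b, c⟩, hm, h⟩ | ⟨⟨⟨a, s⟩, b, c⟩, hm, h⟩ | ⟨⟨⟨a, s⟩, b, c⟩, hm, h⟩) <;>
    · rw [mem_triples] at hm
      dsimp only at h
      omega

lemma card_basisIdx (d : ℕ) : 2 * (basisIdx d).card = 3 * d ^ 2 + 3 * d + 2 := by
  rcases d with _ | _ | n
  · decide
  · decide
  have inj {m : ℕ} (g : ℕ → ℕ → ℕ → ℕ × ℕ × ℕ × ℕ)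
      (hg : ∀ a b c a' b' c', g a b c = g a' b' c' → a = a' ∧ b = b' ∧ c = c') :
      ((triples m).image fun u => g u.1.1 u.2.1 u.2.2).card = (triples m).card := by
    apply Finset.card_image_of_injOn
    rintro ⟨⟨a, s⟩, b, c⟩ hu ⟨⟨a', s'⟩, b', c'⟩ hu' h
    obtain ⟨rfl, rfl, rfl⟩ := hg _ _ _ _ _ _ h
    obtain ⟨-, rfl⟩ := mem_triples.mp hu
    obtain ⟨-, rfl⟩ := mem_triples.mp hu'
    rfl
  rw [basisIdx_add_two, Finset.card_union_of_disjoint, Finset.card_union_of_disjoint,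
    inj (fun a b c => (a, 0, b, c)) (by simp), inj (fun a b c => (a, 1, b, c)) (by simp),
    inj (fun a b c => (0, a + 2, b, c)) (by simp)]
  · have h0 := card_triples n
    have h1 := card_triples (n + 1)
    have h2 := card_triples (n + 2)
    linarith
  · rw [Finset.disjoint_left]
    simp only [Finset.mem_image]
    rintro _ ⟨u, -, rfl⟩ ⟨v, -, h⟩
    simp at h
  · rw [Finset.disjoint_left]
    simp only [Finset.mem_union, Finset.mem_image]
    rintro _ ⟨u, -, rfl⟩ (⟨v, -, h⟩ | ⟨v, -, h⟩) <;> simp at h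

lemma ritDim_R2 (K : Type) [Field K] (d : ℕ) :
    ritDim K 2 2 fR2 d = (3 * d ^ 2 + 3 * d + 2) / 2 := by
  have h := card_basisIdx d
  rw [ritDim, span_words_eq, ritV, finrank_span_eq_card (linInd K d), Fintype.card_coe]
  omega

/-- the RIT algebra `R₂` of rank 4 determined by `σ₁ = (1,2)`, `σ₂ = (2,1)`
(the quotient of `K⟨x₁,x₂,y₁,y₂⟩` by `x₁x₂ - x₂x₁`, `y₁y₂ - y₂y₁`, `x₁y₁ - y₁x₁ - y₁²`,
`x₁y₂ - y₂x₁ - y₂²`, `x₂y₁ - y₁x₂ - y₂y₁`, `x₂y₂ - y₂x₂ - y₁y₂`) has Hilbert series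
`(1 + t + t²)/(1 - 3t + 3t² - t³)`: `dim_K (R₂)_d = (3d² + 3d + 2)/2` for every `d ≥ 0`.
In particular `R₂` is not PBW: its Hilbert series differs from `1/(1-t)⁴`. -/
theorem stmt17 (K : Type) [Field K] [CharZero K] :
    (∀ d : ℕ, ritDim K 2 2 fR2 d = (3 * d ^ 2 + 3 * d + 2) / 2) ∧
    (∃ d : ℕ, ritDim K 2 2 fR2 d ≠ Nat.choose (2 + 2 + d - 1) d) := by
  refine ⟨ritDim_R2 K, 3, ?_⟩
  rw [ritDim_R2]
  decide
end
end
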